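/- arXiv:1312.6563 — 2 statements merged into one kernel-verified Lean document; each statement's English description precedes it below -/
import Mathlib

section
/- For every countable set R ⊆ (0,∞), the isometry group Iso(X_R) of the Polish ultrametric Urysohn space X_R has ample generics. Moreover, taking R to be the set of positive rational numbers, the isometry group Iso(X^2_R) of the Polish ultrametric 2-Urysohn space X^2_R has ample generics. -/
/-!
Let `G = Iso(X)`. By a Kechris–Rosendal type criterion (`exists_comeager_orbit`), the diagonal
conjugation action of `G` on `G ^ (n + 1)` has a comeager orbit as soon as it is topologically
transitive and, for every neighbourhood `V` of the identity, every nonempty open set contains a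
nonempty open `U'` in which any two nonempty open subsets are linked by an element of `V`: then
generic points are comeager, and a back-and-forth argument puts any two of them in one orbit.

The sets `U'` come from two properties of `X`.

* *Extension* (`FiniteApprox`, `exists_finite_invariant`). Every tuple of isometries agrees, up to
  a small error on a given finite set, with a tuple `w₀` that permutes a finite set `B`. Here `B`
  is a finite product of sets of coordinate values, any two of whose points are exchanged by a
  coordinatewise swap; localizing such a swap to two small balls (`exists_local_swap`) and
  iterating extends every finite partial isometry of `B` to `X`.
* *Amalgamation* (`AmalgLevel`, `exists_amalgam`). Let `U'` consist of the tuples that agree with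
  `w₀` on `B` up to `ε`. Given `w₁, w₂` in `U'` and finite sets of points relevant to them, an
  isometry `h` moving `B` by at most `ε` puts the first set in a position where its distances to
  the second set depend only on the distances to `B` truncated at `ε`. The union of the finite
  parts of `h w₁ h⁻¹` and `w₂` is then a partial isometry, and it extends to `X` by homogeneity.

For topological transitivity, `ε` is taken larger than all distances in question.

It remains to find levels `ε` at which amalgamation works. In `X_R` each ball has infinitely many
children, so two points with the same truncated distances to `B` can be put at the largest possible
distance, and every `ε ∈ R ∪ {0}` is admissible (`amalgLevel_of_fresh`). In `X^2_R` with `R` the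
positive rationals, each ball has only two children, so such points are forced to be at a
distance smaller than their distance `m` to `B`; the common value is chosen in `R` below `m` but
above all smaller distances in question, and every positive irrational `ε` is admissible
(`amalgLevel_of_binary`).
-/

open Metric Set Topology

namespace UltraGen

variable {X : Type*} [MetricSpace X]

/-- `B` is a ball of radius `r` (i.e. `B = ball x r` for some center, with `r > 0`). -/
def IsBallRad (B : Set X) (r : ℝ) : Prop := 0 < r ∧ ∃ x : X, B = Metric.ball x r

/-- `B` is a ball in `X`. -/
def IsBall (B : Set X) : Prop := ∃ r, IsBallRad B r

/-- An FD family: a finite family of pairwise disjoint balls. -/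
def FDFamily (𝓑 : Set (Set X)) : Prop :=
  𝓑.Finite ∧ (∀ B ∈ 𝓑, IsBall B) ∧ 𝓑.Pairwise fun B B' => Disjoint B B'

/-- τ(g,𝓑) = {g' ∈ Iso(X) : g'[B] = g[B] for all B ∈ 𝓑}. -/
def tau (g : X ≃ᵢ X) (𝓑 : Set (Set X)) : Set (X ≃ᵢ X) :=
  {g' | ∀ B ∈ 𝓑, g' '' B = g '' B}

/-- 𝓑' strengthens 𝓑 iff τ(Id,𝓑') ⊆ τ(Id,𝓑). -/
def Strengthens (𝓑' 𝓑 : Set (Set X)) : Prop :=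
  tau (1 : X ≃ᵢ X) 𝓑' ⊆ tau (1 : X ≃ᵢ X) 𝓑

/-- 𝒪^𝓑(C) = {g[C] : g ∈ τ(Id,𝓑)}. -/
def orb (𝓑 : Set (Set X)) (C : Set X) : Set (Set X) :=
  (fun g : X ≃ᵢ X => g '' C) '' tau (1 : X ≃ᵢ X) 𝓑

/-- A ball `C` is 𝓑-extremal in `X` if 𝒪^𝓑(C) is infinite or a singleton. -/
def Extremal (𝓑 : Set (Set X)) (C : Set X) : Prop :=
  (orb 𝓑 C).Infinite ∨ ∃ D, orb 𝓑 C = {D}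

/-- `X` has the 𝓑-extremality property if every ball in `X` is 𝓑-extremal in `X`. -/
def ExtremalityProperty (X : Type*) [MetricSpace X] (𝓑 : Set (Set X)) : Prop :=
  ∀ C : Set X, IsBall C → Extremal 𝓑 C

/-- `C` is a ball of radius `r` which is r-maximal 𝓑-non-extremal in `X`:
`C` is 𝓑-non-extremal and every ball of radius `r' > r` containing `C` is 𝓑-extremal. -/
def RMaxNonExtremalRad (𝓑 : Set (Set X)) (C : Set X) (r : ℝ) : Prop :=
  IsBallRad C r ∧ ¬ Extremal 𝓑 C ∧
  ∀ (C' : Set X) (r' : ℝ), r < r' → IsBallRad C' r' → C ⊆ C' → Extremal 𝓑 C'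

/-- `C` is r-maximal 𝓑-non-extremal in `X` (for some radius of `C`). -/
def RMaxNonExtremal (𝓑 : Set (Set X)) (C : Set X) : Prop :=
  ∃ r, RMaxNonExtremalRad 𝓑 C r

/-- Distance between two subsets of `X`. -/
noncomputable def setDist (A B : Set X) : ℝ :=
  sInf ((fun p : X × X => dist p.1 p.2) '' A ×ˢ B)

/-- Two subsets are similar if some isometry of `X` maps one onto the other. -/
def Similar (A B : Set X) : Prop := ∃ g : X ≃ᵢ X, g '' A = B

/-- `[B]` for a ball `B` of radius `r`: `B` together with all balls `B'` of radius `r`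
similar to `B` with `dist(B,B') = r`. -/
def ballClass (B : Set X) (r : ℝ) : Set (Set X) :=
  insert B {B' | (∃ x : X, B' = Metric.ball x r) ∧ Similar B B' ∧ setDist B B' = r}

/-- `g` permutes a finite set `Z`. -/
def PermutesSet (g : X ≃ᵢ X) (Z : Set X) : Prop := g '' Z = Z

/-- `g` permutes an FD family 𝓑. -/
def PermutesFam (g : X ≃ᵢ X) (𝓑 : Set (Set X)) : Prop :=
  (fun B => g '' B) '' 𝓑 = 𝓑

/-- The topology of pointwise convergence on the isometry group of `X`. -/
instance isoTopology (X : Type*) [PseudoEMetricSpace X] : TopologicalSpace (X ≃ᵢ X) :=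
  TopologicalSpace.induced (fun g => (g : X → X)) Pi.topologicalSpace

/-- A topological group has ample generics if each diagonal conjugation action
on `G^(n+1)` has a comeager orbit. -/
def HasAmpleGenerics (G : Type*) [Group G] [TopologicalSpace G] : Prop :=
  ∀ n : ℕ, ∃ v : Fin (n + 1) → G,
    {w : Fin (n + 1) → G | ∃ g : G, ∀ i, w i = g * v i * g⁻¹} ∈ residual (Fin (n + 1) → G)

end UltraGen

namespace UltraGen

/-- Carrier of the Polish ultrametric Urysohn space `X_R`:
sequences `x ∈ ℕ^R` such that for every `r > 0` the set `{r' ∈ R : r' > r, x r' ≠ 0}`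
is finite. -/
def UrysohnCarrier (R : Set ℝ) : Type :=
  {x : R → ℕ // ∀ r : ℝ, 0 < r → {p : R | r < (p : ℝ) ∧ x p ≠ 0}.Finite}

/-- The Urysohn ultrametric: `d(x,y) = max {r ∈ R : x r ≠ y r}` (for `x ≠ y`). -/
noncomputable def urysohnDist {R : Set ℝ} (x y : UrysohnCarrier R) : ℝ :=
  sSup {r : ℝ | ∃ h : r ∈ R, x.1 ⟨r, h⟩ ≠ y.1 ⟨r, h⟩}

/-- Carrier of the Polish ultrametric `n`-Urysohn space `X^n_R`: the subspace of `X_R`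
of sequences taking values in `{0, …, n-1}`. -/
def UrysohnCarrierN (R : Set ℝ) (n : ℕ) : Type :=
  {x : R → ℕ // (∀ p : R, x p < n) ∧ ∀ r : ℝ, 0 < r → {p : R | r < (p : ℝ) ∧ x p ≠ 0}.Finite}

/-- The Urysohn ultrametric on `X^n_R`. -/
noncomputable def urysohnDistN {R : Set ℝ} {n : ℕ} (x y : UrysohnCarrierN R n) : ℝ :=
  sSup {r : ℝ | ∃ h : r ∈ R, x.1 ⟨r, h⟩ ≠ y.1 ⟨r, h⟩}

/-- The set of positive rationals, as a subset of `ℝ`. -/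
def QPos : Set ℝ := {r : ℝ | ∃ q : ℚ, 0 < q ∧ (q : ℝ) = r}

/-- The set of positive integers, as a subset of `ℝ`. -/
def NPos : Set ℝ := {r : ℝ | ∃ m : ℕ, 0 < m ∧ (m : ℝ) = r}

end UltraGen

namespace UltraGen

/-! ### A criterion for a comeager orbit -/

section Criterion

open Filter

/-- `y` is generic for the action `a` if it has dense orbit and if `V · y` is dense in a neighbourhood
of `y` for every neighbourhood `V` of the identity. -/
def GenericPt {G Y : Type*} [Group G] [TopologicalSpace G] [TopologicalSpace Y]
    (a : G → Y → Y) (y : Y) : Prop :=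
  (∀ V ∈ 𝓝 (1 : G), y ∈ interior (closure ((fun v => a v y) '' V))) ∧
    Dense (range fun g => a g y)

/-- `U` is `V`-transitive: any two nonempty open subsets of `U` are linked by an element of `V`. -/
def TransOn {G Y : Type*} [TopologicalSpace Y] (a : G → Y → Y) (V : Set G) (U : Set Y) : Prop :=
  ∀ U₁ U₂ : Set Y, IsOpen U₁ → IsOpen U₂ → U₁ ⊆ U → U₂ ⊆ U → U₁.Nonempty → U₂.Nonempty →
    ∃ v ∈ V, ∃ y ∈ U₁, a v y ∈ U₂

/-- For comeager many `y`, the partial orbit `V · y` is dense in every `V`-transitive open set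
containing `y`. -/
theorem interior_closure_orbit_of_trans {G Y : Type*} [TopologicalSpace Y]
    [SecondCountableTopology Y] {a : G → Y → Y}
    (hc : ∀ g, Continuous (a g)) (V : Set G) :
    {y | ∀ U, IsOpen U → TransOn a V U → y ∈ U → U ⊆ closure ((fun v => a v y) '' V)} ∈
      residual Y := by
  -- `Z O` is the set of points that `V` can move into `O`; it is open.
  let Z : Set Y → Set Y := fun O => {y | ∃ v ∈ V, a v y ∈ O}
  have hZ : ∀ O, IsOpen O → IsOpen (Z O) := by
    intro O hO
    have : Z O = ⋃ v ∈ V, a v ⁻¹' O := by ext y; simp [Z]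
    rw [this]
    exact isOpen_biUnion fun v _ => hO.preimage (hc v)
  have hT : ∀ O ∈ TopologicalSpace.countableBasis Y,
      Z O ∪ (closure (Z O))ᶜ ∈ residual Y := by
    intro O hO
    have hO' := TopologicalSpace.isOpen_of_mem_countableBasis hO
    refine residual_of_dense_open ((hZ O hO').union isClosed_closure.isOpen_compl) ?_
    intro y
    by_cases hy : y ∈ closure (Z O)
    · exact closure_mono subset_union_left hy
    · exact subset_closure (Or.inr hy)
  have := (countable_bInter_mem (TopologicalSpace.countable_countableBasis Y)).2 hT
  filter_upwards [this] with y hy U hU hUV hyU x hx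
  rw [(TopologicalSpace.isBasis_countableBasis Y).mem_closure_iff]
  intro O' hO' hxO'
  obtain ⟨O, hO, hxO, hOU⟩ := (TopologicalSpace.isBasis_countableBasis Y).exists_subset_of_mem_open
    (show x ∈ O' ∩ U from ⟨hxO', hx⟩)
    ((TopologicalSpace.isOpen_of_mem_countableBasis hO').inter hU)
  have hOo := TopologicalSpace.isOpen_of_mem_countableBasis hO
  have hyO := mem_iInter₂.1 hy O hO
  have hycl : y ∈ closure (Z O) := by
    rw [_root_.mem_closure_iff]
    intro W hW hyW
    obtain ⟨v, hv, y', hy', hvy'⟩ := hUV (W ∩ U) O (hW.inter hU) hOo inter_subset_right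
      (hOU.trans inter_subset_right) ⟨y, hyW, hyU⟩ ⟨x, hxO⟩
    exact ⟨y', hy'.1, v, hv, hvy'⟩
  rcases hyO with hyZ | hyZ
  · obtain ⟨v, hv, hvy⟩ := hyZ
    exact ⟨a v y, (hOU hvy).1, v, hv, rfl⟩
  · exact absurd hycl hyZ

variable {G Y : Type*} [Group G] [TopologicalSpace G] [IsTopologicalGroup G]
  [TopologicalSpace Y] {a : G → Y → Y}

/-- Generic points are comeager if small neighbourhoods of the identity act transitively on the
members of a dense family of open sets, and the whole group acts topologically transitively. -/
theorem genericPt_mem_residual [SecondCountableTopology G] [SecondCountableTopology Y]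
    (hc : ∀ g, Continuous (a g))
    (hloc : ∀ V ∈ 𝓝 (1 : G), ∀ U : Set Y, IsOpen U → U.Nonempty →
      ∃ U' ⊆ U, IsOpen U' ∧ U'.Nonempty ∧ TransOn a V U')
    (htrans : TransOn a univ univ) :
    {y | GenericPt a y} ∈ residual Y := by
  obtain ⟨V, hV⟩ := (𝓝 (1 : G)).exists_antitone_basis
  have h1 : ∀ n, {y | y ∈ interior (closure ((fun v => a v y) '' V n))} ∈ residual Y := by
    intro n
    have hD : (⋃₀ {U | IsOpen U ∧ TransOn a (V n) U}) ∈ residual Y := by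
      refine residual_of_dense_open (isOpen_sUnion fun U hU => hU.1) ?_
      rw [dense_iff_inter_open]
      intro U hU hne
      obtain ⟨U', hU'U, hU'o, ⟨y, hy⟩, hU't⟩ := hloc (V n) (hV.1.mem_of_mem trivial) U hU hne
      exact ⟨y, hU'U hy, U', ⟨hU'o, hU't⟩, hy⟩
    filter_upwards [hD, interior_closure_orbit_of_trans hc (V n)] with y hy hy'
    obtain ⟨U, ⟨hUo, hUt⟩, hyU⟩ := hy
    exact mem_interior.2 ⟨U, hy' U hUo hUt hyU, hUo, hyU⟩
  filter_upwards [eventually_countable_forall.2 h1, interior_closure_orbit_of_trans hc univ]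
    with y hy hy'
  refine ⟨fun W hW => ?_, ?_⟩
  · obtain ⟨n, -, hn⟩ := hV.1.mem_iff.1 hW
    exact interior_mono (closure_mono (image_mono hn)) (hy n)
  · intro x
    simpa using hy' univ isOpen_univ htrans trivial (mem_univ x)

/-- Local density of partial orbits passes from `y` to all points of its orbit. -/
theorem GenericPt.act (h1 : ∀ y, a 1 y = y) (hm : ∀ g h y, a (g * h) y = a g (a h y))
    (hc : ∀ g, Continuous (a g)) {y : Y} (hy : GenericPt a y) (g : G) {V : Set G}
    (hV : V ∈ 𝓝 (1 : G)) : a g y ∈ interior (closure ((fun v => a v (a g y)) '' V)) := by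
  let e : Y ≃ₜ Y :=
    { toFun := a g, invFun := a g⁻¹
      left_inv := fun y => by rw [← hm, inv_mul_cancel, h1]
      right_inv := fun y => by rw [← hm, mul_inv_cancel, h1]
      continuous_toFun := hc g, continuous_invFun := hc _ }
  have hW : (fun v => g * v * g⁻¹) ⁻¹' V ∈ 𝓝 (1 : G) := by
    have : ContinuousAt (fun v : G => g * v * g⁻¹) 1 := by fun_prop
    exact this (by simpa using hV)
  have h2 := mem_image_of_mem e (hy.1 _ hW)
  rw [e.image_interior, e.image_closure] at h2
  refine interior_mono (closure_mono ?_) h2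
  rintro _ ⟨_, ⟨v, hv, rfl⟩, rfl⟩
  refine ⟨g * v * g⁻¹, hv, ?_⟩
  change _ = a g (a v y)
  simp [← hm]

/-- Two generic points lie in the same orbit: a back-and-forth produces `g k` and `h k`, each
convergent, such that `g k · y₁` and `h k · y₂` get arbitrarily close. -/
theorem GenericPt.same_orbit [SecondCountableTopology Y] [T3Space Y]
    (h1 : ∀ y, a 1 y = y) (hm : ∀ g h y, a (g * h) y = a g (a h y))
    (hc : ∀ g, Continuous (a g)) (hc' : ∀ y, Continuous fun g => a g y)
    (hcomp : ∃ V : ℕ → G → Set G, (∀ k g, V k g ∈ 𝓝 (1 : G)) ∧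
      ∀ γ : ℕ → G, (∀ k, ∃ v ∈ V k (γ k), γ (k + 1) = v * γ k) → ∃ g, Tendsto γ atTop (𝓝 g))
    {y₁ y₂ : Y} (hy₁ : GenericPt a y₁) (hy₂ : GenericPt a y₂) : ∃ g, y₂ = a g y₁ := by
  obtain ⟨V, hV, hlim⟩ := hcomp
  let _ := TopologicalSpace.metrizableSpaceMetric Y
  let Inv : ℕ → G × G → Prop := fun k p =>
    a p.1 y₁ ∈ closure ((fun v => a v (a p.2 y₂)) '' V k p.2)
  have step : ∀ k (p : G × G), Inv k p → ∃ p' : G × G, Inv (k + 1) p' ∧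
      (∃ v ∈ V k p.1, p'.1 = v * p.1) ∧ (∃ v ∈ V k p.2, p'.2 = v * p.2) ∧
      dist (a p'.1 y₁) (a p'.2 y₂) < (1 / 2) ^ k := by
    intro k p hp
    obtain ⟨_, hz, w, hw, rfl⟩ := _root_.mem_closure_iff.1 hp _ isOpen_interior
      (hy₁.act h1 hm hc p.1 (hV k p.1))
    have hz' := interior_subset hz
    have ho : IsOpen (interior (closure ((fun v => a v (a (w * p.2) y₂)) '' V (k + 1) (w * p.2)))
        ∩ Metric.ball (a (w * p.2) y₂) ((1 / 2) ^ k)) :=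
      isOpen_interior.inter Metric.isOpen_ball
    obtain ⟨_, hx, v, hv, rfl⟩ := _root_.mem_closure_iff.1 hz' _ ho
      (by
        change a w (a p.2 y₂) ∈ _
        rw [← hm]
        exact ⟨hy₂.act h1 hm hc _ (hV _ _), Metric.mem_ball_self (by positivity)⟩)
    refine ⟨(v * p.1, w * p.2), ?_, ⟨v, hv, rfl⟩, ⟨w, hw, rfl⟩, ?_⟩
    · simpa [Inv, hm] using interior_subset hx.1
    · have := hx.2
      simpa [hm] using this
  obtain ⟨_, hx, g₀, rfl⟩ := hy₁.2.inter_open_nonempty _ isOpen_interior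
    ⟨_, hy₂.act h1 hm hc 1 (hV 0 1)⟩
  have h0 : Inv 0 (g₀, 1) := interior_subset hx
  choose F hF using fun k (p : {p // Inv k p}) => step k p.1 p.2
  let s : ∀ k, {p // Inv k p} := fun k =>
    Nat.rec ⟨(g₀, 1), h0⟩ (fun k p => ⟨F k p, (hF k p).1⟩) k
  have hs : ∀ k, (s (k + 1)).1 = F k (s k) := fun k => rfl
  obtain ⟨g, hg⟩ := hlim (fun k => (s k).1.1) fun k => by
    have := (hF k (s k)).2.1
    rwa [← hs] at this
  obtain ⟨h, hh⟩ := hlim (fun k => (s k).1.2) fun k => by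
    have := (hF k (s k)).2.2.1
    rwa [← hs] at this
  have hd : ∀ k, dist (a (s (k + 1)).1.1 y₁) (a (s (k + 1)).1.2 y₂) < (1 / 2) ^ k := by
    intro k
    have := (hF k (s k)).2.2.2
    rwa [← hs] at this
  have t1 := (((hc' y₁).tendsto g).comp hg).comp (tendsto_add_atTop_nat 1)
  have t2 := (((hc' y₂).tendsto h).comp hh).comp (tendsto_add_atTop_nat 1)
  have t3 := t1.dist t2
  have t4 : dist (a g y₁) (a h y₂) ≤ 0 :=
    le_of_tendsto_of_tendsto' t3
      (tendsto_pow_atTop_nhds_zero_of_lt_one (by norm_num : (0 : ℝ) ≤ 1 / 2) (by norm_num))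
      fun k => (hd k).le
  have t5 : a g y₁ = a h y₂ := dist_le_zero.1 t4
  refine ⟨h⁻¹ * g, ?_⟩
  rw [hm, t5, ← hm, inv_mul_cancel, h1]

/-- A topologically transitive action of a complete separable group has a comeager orbit if, for
each neighbourhood `V` of the identity, every nonempty open set contains a nonempty `V`-transitive
one. Completeness enters as `hcomp`: sequences in `G` with sufficiently small steps converge. -/
theorem exists_comeager_orbit [SecondCountableTopology G] [SecondCountableTopology Y] [T3Space Y]
    [Nonempty Y]
    (h1 : ∀ y, a 1 y = y) (hm : ∀ g h y, a (g * h) y = a g (a h y))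
    (hc : ∀ g, Continuous (a g)) (hc' : ∀ y, Continuous fun g => a g y)
    (hcomp : ∃ V : ℕ → G → Set G, (∀ k g, V k g ∈ 𝓝 (1 : G)) ∧
      ∀ γ : ℕ → G, (∀ k, ∃ v ∈ V k (γ k), γ (k + 1) = v * γ k) → ∃ g, Tendsto γ atTop (𝓝 g))
    (hloc : ∀ V ∈ 𝓝 (1 : G), ∀ U : Set Y, IsOpen U → U.Nonempty →
      ∃ U' ⊆ U, IsOpen U' ∧ U'.Nonempty ∧ TransOn a V U')
    (htrans : TransOn a univ univ) :
    ∃ y, {y' | ∃ g, y' = a g y} ∈ residual Y := by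
  have hres := genericPt_mem_residual hc hloc htrans
  -- If no generic point existed, every subset would be comeager.
  rcases {y | GenericPt a y}.eq_empty_or_nonempty with he | ⟨y, hy⟩
  · rw [he] at hres
    exact ⟨Classical.arbitrary Y, mem_of_superset hres (empty_subset _)⟩
  · exact ⟨y, mem_of_superset hres fun y' hy' => hy.same_orbit h1 hm hc hc' hcomp hy'⟩

end Criterion

/-! ### The isometry group as a topological group -/

section IsoGroup

open Filter

variable {X : Type*} [MetricSpace X]

theorem iso_tendsto_iff {α : Type*} {l : Filter α} {γ : α → X ≃ᵢ X} {g : X ≃ᵢ X} :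
    Tendsto γ l (𝓝 g) ↔ ∀ x, Tendsto (fun k => γ k x) l (𝓝 (g x)) := by
  rw [nhds_induced, tendsto_comap_iff, tendsto_pi_nhds]
  rfl

theorem iso_continuous_iff {α : Type*} [TopologicalSpace α] {γ : α → X ≃ᵢ X} :
    Continuous γ ↔ ∀ x, Continuous fun k => γ k x := by
  rw [continuous_induced_rng, continuous_pi_iff]
  rfl

theorem iso_continuous_eval (x : X) : Continuous fun g : X ≃ᵢ X => g x :=
  iso_continuous_iff.1 continuous_id x

instance isoTopologicalGroup : IsTopologicalGroup (X ≃ᵢ X) where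
  continuous_mul := by
    rw [iso_continuous_iff]
    intro x
    rw [continuous_iff_continuousAt]
    rintro ⟨g₀, h₀⟩
    rw [ContinuousAt, tendsto_iff_dist_tendsto_zero]
    have e1 : Tendsto (fun p : (X ≃ᵢ X) × (X ≃ᵢ X) => dist (p.2 x) (h₀ x) +
        dist (p.1 (h₀ x)) (g₀ (h₀ x))) (𝓝 (g₀, h₀)) (𝓝 0) := by
      have : Continuous (fun p : (X ≃ᵢ X) × (X ≃ᵢ X) => dist (p.2 x) (h₀ x) +
        dist (p.1 (h₀ x)) (g₀ (h₀ x))) := by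
        have h1 := (iso_continuous_eval x).comp (continuous_snd (X := X ≃ᵢ X) (Y := X ≃ᵢ X))
        have h2 := (iso_continuous_eval (h₀ x)).comp
          (continuous_fst (X := X ≃ᵢ X) (Y := X ≃ᵢ X))
        exact (h1.dist continuous_const).add (h2.dist continuous_const)
      simpa using this.tendsto (g₀, h₀)
    refine squeeze_zero (fun _ => dist_nonneg) (fun p => ?_) e1
    have := dist_triangle (p.1 (p.2 x)) (p.1 (h₀ x)) (g₀ (h₀ x))
    rw [p.1.dist_eq] at this
    exact this
  continuous_inv := by
    rw [iso_continuous_iff]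
    intro x
    rw [continuous_iff_continuousAt]
    intro g₀
    rw [ContinuousAt, tendsto_iff_dist_tendsto_zero]
    have e1 : Tendsto (fun g : X ≃ᵢ X => dist (g₀ (g₀⁻¹ x)) (g (g₀⁻¹ x))) (𝓝 g₀) (𝓝 0) := by
      have : Continuous (fun g : X ≃ᵢ X => dist (g₀ (g₀⁻¹ x)) (g (g₀⁻¹ x))) :=
        continuous_const.dist (iso_continuous_eval _)
      simpa using this.tendsto g₀
    refine e1.congr fun g => ?_
    rw [← g.dist_eq (g⁻¹ x), IsometryEquiv.apply_inv_self, IsometryEquiv.apply_inv_self]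

instance isoT2 : T2Space (X ≃ᵢ X) :=
  T2Space.of_injective_continuous (f := fun g : X ≃ᵢ X => (g : X → X))
    DFunLike.coe_injective continuous_induced_dom

/-- For isometries, pointwise convergence on a dense sequence is pointwise convergence. -/
theorem iso_isInducing_denseSeq [TopologicalSpace.SeparableSpace X] [Nonempty X] :
    IsInducing (fun (g : X ≃ᵢ X) (j : ℕ) => g (TopologicalSpace.denseSeq X j)) := by
  rw [isInducing_iff_nhds]
  intro g₀
  refine le_antisymm ?_ ?_
  · rw [← map_le_iff_le_comap]
    exact (continuous_pi fun j => iso_continuous_eval _).tendsto g₀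
  · rw [← tendsto_id', iso_tendsto_iff]
    intro x
    have hj : ∀ j, Tendsto (fun g : X ≃ᵢ X => g (TopologicalSpace.denseSeq X j))
        (comap (fun (g : X ≃ᵢ X) (j : ℕ) => g (TopologicalSpace.denseSeq X j))
          (𝓝 fun j => g₀ (TopologicalSpace.denseSeq X j)))
        (𝓝 (g₀ (TopologicalSpace.denseSeq X j))) := by
      have := tendsto_comap (f := fun (g : X ≃ᵢ X) (j : ℕ) => g (TopologicalSpace.denseSeq X j))
        (x := 𝓝 fun j => g₀ (TopologicalSpace.denseSeq X j))
      exact tendsto_pi_nhds.1 this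
    refine Metric.tendsto_nhds.2 fun ε hε => ?_
    obtain ⟨j, hjx⟩ := (TopologicalSpace.denseRange_denseSeq X).exists_dist_lt x
      (show 0 < ε / 3 by positivity)
    have h3 := Metric.tendsto_nhds.1 (hj j) (ε / 3) (by positivity)
    filter_upwards [h3] with g hg
    change dist (g x) (g₀ x) < ε
    have e1 := dist_triangle4 (g x) (g (TopologicalSpace.denseSeq X j))
      (g₀ (TopologicalSpace.denseSeq X j)) (g₀ x)
    rw [g.dist_eq, g₀.dist_eq, dist_comm _ x] at e1
    linarith

instance isoSecondCountable [TopologicalSpace.SeparableSpace X] [Nonempty X] :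
    SecondCountableTopology (X ≃ᵢ X) :=
  haveI : SecondCountableTopology X := UniformSpace.secondCountable_of_separable X
  iso_isInducing_denseSeq.secondCountableTopology

/-- Pointwise limits of isometries, with pointwise convergent inverses, are isometries. -/
theorem iso_exists_tendsto {γ : ℕ → X ≃ᵢ X}
    (h : ∀ x, ∃ y, Tendsto (fun k => γ k x) atTop (𝓝 y))
    (h' : ∀ x, ∃ y, Tendsto (fun k => (γ k)⁻¹ x) atTop (𝓝 y)) :
    ∃ g, Tendsto γ atTop (𝓝 g) := by
  choose f hf using h
  choose f' hf' using h'
  have hff' : ∀ x, f (f' x) = x := by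
    intro x
    refine tendsto_nhds_unique (hf (f' x)) ?_
    rw [tendsto_iff_dist_tendsto_zero]
    refine (tendsto_iff_dist_tendsto_zero.1 (hf' x)).congr fun k => ?_
    rw [← (γ k).dist_eq ((γ k)⁻¹ x), IsometryEquiv.apply_inv_self, dist_comm]
  have hiso : Isometry f := by
    refine Isometry.of_dist_eq fun x y => ?_
    refine tendsto_nhds_unique ((hf x).dist (hf y)) ?_
    simp only [IsometryEquiv.dist_eq]
    exact tendsto_const_nhds
  exact ⟨IsometryEquiv.mk' f f' hff' hiso, iso_tendsto_iff.2 hf⟩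

/-- Isometries whose successive values on a dense sequence get summably close converge pointwise. -/
theorem iso_cauchy_of_dense [CompleteSpace X] [TopologicalSpace.SeparableSpace X] [Nonempty X]
    {γ : ℕ → X ≃ᵢ X}
    (h : ∀ j k, j ≤ k → dist (γ k (TopologicalSpace.denseSeq X j))
      (γ (k + 1) (TopologicalSpace.denseSeq X j)) ≤ (1 / 2) ^ k) (x : X) :
    ∃ y, Tendsto (fun k => γ k x) atTop (𝓝 y) := by
  have hc : ∀ j, CauchySeq fun k => γ k (TopologicalSpace.denseSeq X j) := by
    intro j
    refine cauchySeq_of_summable_dist ?_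
    refine Summable.of_norm_bounded_eventually_nat (g := fun k => (1 / 2 : ℝ) ^ k)
      summable_geometric_two ?_
    filter_upwards [eventually_ge_atTop j] with k hk
    rw [Real.norm_of_nonneg dist_nonneg]
    exact h j k hk
  refine cauchySeq_tendsto_of_complete ?_
  rw [Metric.cauchySeq_iff]
  intro ε hε
  obtain ⟨j, hjx⟩ := (TopologicalSpace.denseRange_denseSeq X).exists_dist_lt x
    (show 0 < ε / 3 by positivity)
  obtain ⟨N, hN⟩ := Metric.cauchySeq_iff.1 (hc j) (ε / 3) (by positivity)
  refine ⟨N, fun m hm n hn => ?_⟩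
  have e1 := dist_triangle4 (γ m x) (γ m (TopologicalSpace.denseSeq X j))
      (γ n (TopologicalSpace.denseSeq X j)) (γ n x)
  rw [(γ m).dist_eq, (γ n).dist_eq, dist_comm _ x] at e1
  linarith [hN m hm n hn]

/-- Completeness of the isometry group, in the form used by the back-and-forth argument. -/
theorem iso_complete [CompleteSpace X] [TopologicalSpace.SeparableSpace X] [Nonempty X] :
    ∃ V : ℕ → (X ≃ᵢ X) → Set (X ≃ᵢ X), (∀ k g, V k g ∈ 𝓝 (1 : X ≃ᵢ X)) ∧
      ∀ γ : ℕ → X ≃ᵢ X, (∀ k, ∃ v ∈ V k (γ k), γ (k + 1) = v * γ k) →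
        ∃ g, Tendsto γ atTop (𝓝 g) := by
  let q := TopologicalSpace.denseSeq X
  -- The first condition makes the inverses converge, the second the isometries themselves.
  refine ⟨fun k g => {v | ∀ j ∈ Finset.range (k + 1), dist (v (q j)) (q j) < (1 / 2) ^ k ∧
    dist (v (g (q j))) (g (q j)) < (1 / 2) ^ k}, fun k g => ?_, fun γ hγ => ?_⟩
  · change ∀ᶠ v in 𝓝 (1 : X ≃ᵢ X), ∀ j ∈ Finset.range (k + 1), _
    rw [Finset.eventually_all]
    have key : ∀ x : X, ∀ᶠ v in 𝓝 (1 : X ≃ᵢ X), dist (v x) x < (1 / 2) ^ k := fun x =>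
      Metric.tendsto_nhds.1 ((iso_continuous_eval x).tendsto 1) _ (by positivity)
    exact fun j _ => (key _).and (key _)
  · refine iso_exists_tendsto (iso_cauchy_of_dense fun j k hjk => ?_)
      (iso_cauchy_of_dense (γ := fun k => (γ k)⁻¹) fun j k hjk => ?_)
    · obtain ⟨v, hv, e⟩ := hγ k
      rw [e, dist_comm]
      exact (hv j (Finset.mem_range.2 (by omega))).2.le
    · obtain ⟨v, hv, e⟩ := hγ k
      have := (hv j (Finset.mem_range.2 (by omega))).1.le
      rw [e, mul_inv_rev, IsometryEquiv.mul_apply, IsometryEquiv.dist_eq,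
        ← v.dist_eq, IsometryEquiv.apply_inv_self]
      exact this

/-- Basic neighbourhoods in finite powers of the isometry group. -/
theorem iso_pi_nhds {n : ℕ} {u : Fin n → X ≃ᵢ X} {U : Set (Fin n → X ≃ᵢ X)} (hU : U ∈ 𝓝 u) :
    ∃ (A : Finset X) (ε : ℝ), 0 < ε ∧
      ∀ w : Fin n → X ≃ᵢ X, (∀ i, ∀ x ∈ A, dist (w i x) (u i x) < ε) → w ∈ U := by
  have hind : IsInducing (fun (w : Fin n → X ≃ᵢ X) (p : Fin n × X) => w p.1 p.2) := by
    rw [isInducing_iff_nhds]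
    intro w₀
    refine le_antisymm ?_ ?_
    · rw [← map_le_iff_le_comap]
      exact (continuous_pi fun p : Fin n × X =>
        (iso_continuous_eval p.2).comp (continuous_apply p.1)).tendsto w₀
    · rw [← tendsto_id', tendsto_pi_nhds]
      refine fun i => iso_tendsto_iff.2 fun x => ?_
      have := tendsto_comap (f := fun (w : Fin n → X ≃ᵢ X) (p : Fin n × X) => w p.1 p.2)
        (x := 𝓝 fun p : Fin n × X => w₀ p.1 p.2)
      exact (tendsto_pi_nhds.1 this) (i, x)
  rw [hind.nhds_eq_comap, mem_comap] at hU
  obtain ⟨T, hT, hTU⟩ := hU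
  rw [nhds_pi, Filter.mem_pi] at hT
  obtain ⟨I, hI, t, ht, htT⟩ := hT
  choose ε hε hεt using fun p => Metric.mem_nhds_iff.1 (ht p)
  obtain ⟨δ, hδ, hδI⟩ : ∃ δ > 0, ∀ p ∈ hI.toFinset, δ ≤ ε p := by
    rcases hI.toFinset.eq_empty_or_nonempty with he | hne
    · exact ⟨1, one_pos, by simp [he]⟩
    · obtain ⟨p, hp, hpm⟩ := hI.toFinset.exists_min_image ε hne
      exact ⟨ε p, hε p, hpm⟩
  classical
  refine ⟨hI.toFinset.image Prod.snd, δ, hδ, fun w hw => hTU (htT ?_)⟩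
  intro p hp
  have hp' := hI.mem_toFinset.2 hp
  exact hεt p (Metric.mem_ball.2
    ((hw p.1 p.2 (Finset.mem_image_of_mem _ hp')).trans_le (hδI p hp')))

end IsoGroup

/-! ### Homogeneity of ultrametric spaces -/

section Homogeneous

variable {X : Type*} [MetricSpace X] [IsUltrametricDist X]

/-- Any two points of `B` are exchanged by an involutive isometry of `X` preserving `B`. -/
def SwapOn (B : Set X) : Prop :=
  ∀ y ∈ B, ∀ y' ∈ B, ∃ σ : X ≃ᵢ X, σ y = y' ∧ (∀ x, σ (σ x) = x) ∧ ∀ x ∈ B, σ x ∈ B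

theorem ultra_max (x y z : X) : dist x z ≤ max (dist x y) (dist y z) :=
  dist_triangle_max x y z

/-- Triangles are isosceles, the two long sides being equal. -/
theorem ultra_eq_of_lt {x y z : X} (h : dist x y < dist y z) : dist x z = dist y z := by
  have h1 := ultra_max x y z
  have h2 := ultra_max y x z
  rw [dist_comm y x] at h2
  rcases le_max_iff.1 h2 with h3 | h3
  · linarith
  · rw [max_eq_right h.le] at h1
    exact le_antisymm h1 h3

/-- The isometry exchanging the two open balls of radius `dist y y'` around `y` and `y'` by means
of an involution, and fixing all other points. -/
theorem exists_local_swap {B : Set X} (hB : SwapOn B) {y y' : X} (hy : y ∈ B) (hy' : y' ∈ B) :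
    ∃ k : X ≃ᵢ X, k y = y' ∧ (∀ x, k x ∈ B ↔ x ∈ B) ∧ (∀ x, dist (k x) x ≤ dist y y') ∧
      ∀ x, dist y y' ≤ dist x y → dist y y' ≤ dist x y' → k x = x := by
  classical
  obtain ⟨σ, hσ, hσσ, hσB⟩ := hB y hy y' hy'
  set r := dist y y' with hr
  rcases eq_or_lt_of_le (dist_nonneg : 0 ≤ dist y y') with h0 | h0
  · have : y = y' := dist_eq_zero.1 h0.symm
    exact ⟨1, this, fun x => Iff.rfl, fun x => by simp [hr], fun x _ _ => rfl⟩
  rw [← hr] at h0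
  have hσ' : σ y' = y := by rw [← hσ, hσσ]
  let I : X → Prop := fun x => dist x y < r ∨ dist x y' < r
  have hI : ∀ x, I x → I (σ x) := by
    rintro x (h | h)
    · right; rwa [← hσ, σ.dist_eq]
    · left; rwa [← hσ', σ.dist_eq]
  let k : X → X := fun x => if I x then σ x else x
  have kI : ∀ x, I x → k x = σ x := fun x h => if_pos h
  have kN : ∀ x, ¬ I x → k x = x := fun x h => if_neg h
  have hkk : ∀ x, k (k x) = x := by
    intro x
    by_cases h : I x
    · rw [kI x h, kI _ (hI x h), hσσ]
    · rw [kN x h, kN x h]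
  -- Both exchanged balls are at the same distance from every point outside them.
  have hout : ∀ x x', I x → ¬ I x' → dist x x' = dist y x' ∧ dist y x' = dist y' x' := by
    intro x x' hx hx'
    simp only [I, not_or, not_lt] at hx'
    rw [dist_comm x' y, dist_comm x' y'] at hx'
    have e : dist y x' = dist y' x' := by
      have h1 := ultra_max y y' x'
      have h2 := ultra_max y' y x'
      rw [dist_comm y' y, ← hr, max_eq_right hx'.1] at h2
      rw [← hr, max_eq_right hx'.2] at h1
      exact le_antisymm h1 h2
    refine ⟨?_, e⟩
    rcases hx with h | h
    · exact ultra_eq_of_lt (h.trans_le hx'.1)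
    · rw [e]; exact ultra_eq_of_lt (h.trans_le hx'.2)
  have hdist : ∀ x x', I x → ¬ I x' → dist (σ x) x' = dist x x' := by
    intro x x' hx hx'
    rw [(hout x x' hx hx').1, (hout _ x' (hI x hx) hx').1]
  have hiso : Isometry k := by
    refine Isometry.of_dist_eq fun x x' => ?_
    by_cases h : I x <;> by_cases h' : I x'
    · rw [kI x h, kI x' h', σ.dist_eq]
    · rw [kI x h, kN x' h', hdist x x' h h']
    · rw [kN x h, kI x' h', dist_comm, hdist x' x h' h, dist_comm]
    · rw [kN x h, kN x' h']
  have hkB : ∀ x ∈ B, k x ∈ B := by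
    intro x hx
    by_cases h : I x
    · rw [kI x h]; exact hσB x hx
    · rwa [kN x h]
  refine ⟨IsometryEquiv.mk' k k hkk hiso, ?_, fun x => ⟨fun h => ?_, hkB x⟩, fun x => ?_,
    fun x h1 h2 => ?_⟩
  · exact (kI y (Or.inl (by simpa using h0))).trans hσ
  · have := hkB _ h
    rwa [show k (IsometryEquiv.mk' k k hkk hiso x) = x from hkk x] at this
  · change dist (k x) x ≤ r
    by_cases h : I x
    · rw [kI x h]
      have key : ∀ z, I z → dist z y ≤ r := by
        rintro z (h | h)
        · exact h.le
        · refine (ultra_max z y' y).trans (max_le h.le ?_)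
          rw [dist_comm]
      exact (ultra_max _ y _).trans (max_le (key _ (hI x h)) (by rw [dist_comm]; exact key x h))
    · rw [kN x h, dist_self]; exact h0.le
  · exact kN x (by simp only [I, not_or, not_lt]; exact ⟨h1, h2⟩)

/-- Finite partial isometries of a set `B` with enough swaps extend to isometries of `X`
preserving `B`. -/
theorem exists_extension {B : Set X} (hB : SwapOn B) {ι : Type*} (s : Finset ι) (f f' : ι → X)
    (hf : ∀ i ∈ s, f i ∈ B) (hf' : ∀ i ∈ s, f' i ∈ B)
    (hd : ∀ i ∈ s, ∀ j ∈ s, dist (f i) (f j) = dist (f' i) (f' j)) :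
    ∃ g : X ≃ᵢ X, (∀ i ∈ s, g (f i) = f' i) ∧ ∀ x, g x ∈ B ↔ x ∈ B := by
  classical
  induction s using Finset.induction_on with
  | empty => exact ⟨1, by simp, fun x => Iff.rfl⟩
  | insert i s his ih =>
    obtain ⟨g, hg, hgB⟩ := ih (fun j hj => hf j (Finset.mem_insert_of_mem hj))
      (fun j hj => hf' j (Finset.mem_insert_of_mem hj))
      (fun j hj l hl => hd j (Finset.mem_insert_of_mem hj) l (Finset.mem_insert_of_mem hl))
    have hi := Finset.mem_insert_self i s
    obtain ⟨k, hk, hkB, -, hkfix⟩ := exists_local_swap hB ((hgB _).2 (hf i hi)) (hf' i hi)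
    refine ⟨k * g, fun j hj => ?_, fun x => by rw [IsometryEquiv.mul_apply, hkB, hgB]⟩
    rw [IsometryEquiv.mul_apply]
    rcases Finset.mem_insert.1 hj with rfl | hjs
    · exact hk
    · rw [hg j hjs]
      have e : dist (f' j) (g (f i)) = dist (f' j) (f' i) := by
        rw [← hg j hjs, g.dist_eq, hg j hjs, hd j hj i hi]
      have h1 := ultra_max (g (f i)) (f' j) (f' i)
      rw [dist_comm (g (f i)) (f' j), e, max_self] at h1
      exact hkfix _ (by rw [e]; exact h1) h1

end Homogeneous

/-! ### Amalgamation of tuples of isometries -/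

section Amalgamation

variable {X : Type*} [MetricSpace X]

/-- Distance to `b`, truncated below at `ε`. The family of all `truncDist ε z b`, `b ∈ B`, is the
type of `z` over the closed `ε`-balls around the points of `B`. -/
noncomputable def truncDist (ε : ℝ) (z b : X) : ℝ := max (dist z b) ε

/-- `z` and `z'` have the same type over the closed `ε`-balls around the points of `B`. -/
def SameType (ε : ℝ) (B : Finset X) (z z' : X) : Prop :=
  ∀ b ∈ B, truncDist ε z b = truncDist ε z' b

/-- `b` is a nearest point of `B` to `z`, up to `ε`. -/
def IsNearest (ε : ℝ) (B : Finset X) (z b : X) : Prop :=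
  b ∈ B ∧ ∀ b' ∈ B, truncDist ε z b ≤ truncDist ε z b'

/-- The truncation level `ε` allows amalgamation: any finite set `D₁` can be moved, fixing the
`ε`-balls around `B`, to a position in which its distances to the finite set `D₂` depend only on
the types over `B`; the function `ρ` gives the distance between points of equal type. -/
def AmalgLevel (X : Type*) [MetricSpace X] (ε : ℝ) : Prop :=
  0 ≤ ε ∧ ∀ B D₁ D₂ : Finset X, B.Nonempty → ∃ (ρ : ℝ → ℝ) (h : X ≃ᵢ X),
    (∀ b ∈ B, dist (h b) b ≤ ε) ∧
    ∀ y ∈ D₁, ∀ x ∈ D₂, SameType ε B x y → ∀ b, IsNearest ε B y b →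
      dist x (h y) = ρ (truncDist ε y b)

theorem truncDist_map (ε : ℝ) (g : X ≃ᵢ X) (z b : X) :
    truncDist ε (g z) (g b) = truncDist ε z b := by
  rw [truncDist, g.dist_eq, truncDist]

theorem exists_isNearest (ε : ℝ) {B : Finset X} (hB : B.Nonempty) (z : X) :
    ∃ b, IsNearest ε B z b := by
  obtain ⟨b, hb, h⟩ := B.exists_min_image (truncDist ε z) hB
  exact ⟨b, hb, h⟩

variable [IsUltrametricDist X]

theorem truncDist_congr {ε : ℝ} {z b b' : X} (h : dist b b' ≤ ε) :
    truncDist ε z b = truncDist ε z b' := by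
  have h1 := ultra_max z b b'
  have h2 := ultra_max z b' b
  rw [dist_comm b' b] at h2
  refine le_antisymm (max_le (h2.trans (max_le_max_left _ h)) (le_max_right _ _))
    (max_le (h1.trans (max_le_max_left _ h)) (le_max_right _ _))

theorem truncDist_map_of_close {ε : ℝ} {g : X ≃ᵢ X} {b b' : X} (h : dist (g b) b' ≤ ε) (z : X) :
    truncDist ε (g z) b' = truncDist ε z b := by
  rw [← truncDist_congr h, truncDist_map]

/-- Points of different type are at a distance determined by their types. -/
theorem dist_of_truncDist_ne {ε : ℝ} {x z b : X} (h : truncDist ε x b ≠ truncDist ε z b) :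
    dist x z = max (truncDist ε x b) (truncDist ε z b) := by
  have key : ∀ x z : X, truncDist ε x b < truncDist ε z b →
      dist x z = max (truncDist ε x b) (truncDist ε z b) := by
    intro x z h
    have hz : truncDist ε z b = dist z b := by
      refine max_eq_left (le_of_not_gt fun h' => ?_)
      have : truncDist ε z b = ε := max_eq_right h'.le
      exact absurd (this ▸ h) (not_lt.2 (le_max_right _ _))
    rw [max_eq_right h.le, hz, dist_comm x z, dist_comm z b]
    rw [hz] at h
    have h3 : dist x b < dist b z := by
      rw [dist_comm b z]
      exact (le_max_left _ _).trans_lt h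
    rw [dist_comm z x]
    exact ultra_eq_of_lt h3
  rcases lt_or_gt_of_ne h with h | h
  · exact key x z h
  · rw [dist_comm, max_comm]; exact key z x h

/-- Amalgamation: two tuples `w₁`, `w₂` inducing, up to `ε`, the same permutations `w₀` of a finite
set `B` are, on given finite sets, restrictions of one tuple `w₃`, after moving the first of
them by an isometry `h` that fixes `B` up to `ε`. -/
theorem exists_amalgam (huniv : SwapOn (univ : Set X)) {ε : ℝ} (hε : AmalgLevel X ε)
    {n : ℕ} (B A₁ A₂ : Finset X) (hB : B.Nonempty) (w₀ w₁ w₂ : Fin n → X ≃ᵢ X)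
    (hw₀ : ∀ i x, w₀ i x ∈ B ↔ x ∈ B)
    (hw₁ : ∀ i, ∀ b ∈ B, dist (w₁ i b) (w₀ i b) ≤ ε)
    (hw₂ : ∀ i, ∀ b ∈ B, dist (w₂ i b) (w₀ i b) ≤ ε) :
    ∃ (h : X ≃ᵢ X) (w₃ : Fin n → X ≃ᵢ X), (∀ b ∈ B, dist (h b) b ≤ ε) ∧
      (∀ i, ∀ x ∈ A₂, w₃ i x = w₂ i x) ∧ ∀ i, ∀ y ∈ A₁, w₃ i (h y) = h (w₁ i y) := by
  classical
  obtain ⟨ρ, h, hh, hρ⟩ := hε.2 B (A₁ ∪ Finset.univ.biUnion fun i => A₁.image (w₁ i))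
    (A₂ ∪ Finset.univ.biUnion fun i => A₂.image (w₂ i)) hB
  have hTh : ∀ z, ∀ b ∈ B, truncDist ε (h z) b = truncDist ε z b := fun z b hb =>
    truncDist_map_of_close (hh b hb) z
  have key : ∀ i, ∀ x ∈ A₂, ∀ y ∈ A₁, dist (w₂ i x) (h (w₁ i y)) = dist x (h y) := by
    intro i x hx y hy
    have e1 : ∀ z, ∀ b ∈ B, truncDist ε (w₁ i z) (w₀ i b) = truncDist ε z b := fun z b hb =>
      truncDist_map_of_close (hw₁ i b hb) z
    have e2 : ∀ z, ∀ b ∈ B, truncDist ε (w₂ i z) (w₀ i b) = truncDist ε z b := fun z b hb =>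
      truncDist_map_of_close (hw₂ i b hb) z
    have hsurj : ∀ b ∈ B, ∃ b' ∈ B, w₀ i b' = b := fun b hb =>
      ⟨(w₀ i)⁻¹ b, by rwa [← hw₀ i, IsometryEquiv.apply_inv_self], by simp⟩
    by_cases hT : SameType ε B x y
    · obtain ⟨b, hb⟩ := exists_isNearest ε hB y
      have hT' : SameType ε B (w₂ i x) (w₁ i y) := by
        intro b' hb'
        obtain ⟨b, hb, rfl⟩ := hsurj b' hb'
        rw [e1 y b hb, e2 x b hb, hT b hb]
      have hb' : IsNearest ε B (w₁ i y) (w₀ i b) := by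
        refine ⟨(hw₀ i b).2 hb.1, fun b' hb' => ?_⟩
        obtain ⟨c, hc, rfl⟩ := hsurj b' hb'
        rw [e1 y b hb.1, e1 y c hc]
        exact hb.2 c hc
      rw [hρ y (by simp [hy]) x (by simp [hx]) hT b hb,
        hρ (w₁ i y) _ (w₂ i x) _ hT' _ hb', e1 y b hb.1]
      · exact Finset.mem_union_right _ (Finset.mem_biUnion.2
          ⟨i, Finset.mem_univ _, Finset.mem_image_of_mem _ hy⟩)
      · exact Finset.mem_union_right _ (Finset.mem_biUnion.2
          ⟨i, Finset.mem_univ _, Finset.mem_image_of_mem _ hx⟩)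
    · simp only [SameType, not_forall] at hT
      obtain ⟨b, hb, hne⟩ := hT
      have hb0 := (hw₀ i b).2 hb
      rw [dist_of_truncDist_ne (x := x) (z := h y) (b := b) (by rwa [hTh y b hb]),
        dist_of_truncDist_ne (x := w₂ i x) (z := h (w₁ i y)) (b := w₀ i b)
          (by rwa [hTh _ _ hb0, e1 y b hb, e2 x b hb]),
        hTh y b hb, hTh _ _ hb0, e1 y b hb, e2 x b hb]
  have hex : ∀ i, ∃ g : X ≃ᵢ X, (∀ x ∈ A₂, g x = w₂ i x) ∧ ∀ y ∈ A₁, g (h y) = h (w₁ i y) := by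
    intro i
    obtain ⟨g, hg, -⟩ := exists_extension huniv (A₂.disjSum A₁) (Sum.elim id h)
      (Sum.elim (w₂ i) fun y => h (w₁ i y)) (fun _ _ => mem_univ _) (fun _ _ => mem_univ _) (by
        rintro (x | x) hx (y | y) hy <;>
          simp only [Finset.inl_mem_disjSum, Finset.inr_mem_disjSum] at hx hy
        · simp [IsometryEquiv.dist_eq]
        · simpa using (key i x hx y hy).symm
        · have := (key i y hy x hx).symm
          rw [dist_comm, dist_comm (w₂ i y)] at this
          simpa using this
        · simp [IsometryEquiv.dist_eq])
    exact ⟨g, fun x hx => by simpa using hg (Sum.inl x) (by simpa using hx),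
      fun y hy => by simpa using hg (Sum.inr y) (by simpa using hy)⟩
  choose w₃ h2 h1 using hex
  exact ⟨h, w₃, hh, h2, h1⟩

end Amalgamation

/-! ### Ample generics from extension and amalgamation -/

section Ample

variable {X : Type*} [MetricSpace X] [IsUltrametricDist X]

/-- Every finite set `D` has, up to `δ`, an isometric copy inside a finite set `B` with enough
swaps. By `exists_extension` all partial isometries of `B` extend to isometries of `X`
preserving `B`, so this is an approximate form of the Hrushovski extension property. -/
def FiniteApprox (X : Type*) [MetricSpace X] : Prop :=
  ∀ (D : Finset X) (δ : ℝ), 0 < δ → ∃ (B : Finset X) (t : X → X), SwapOn (B : Set X) ∧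
    (∀ x ∈ D, t x ∈ B ∧ dist x (t x) < δ) ∧
    ∀ x ∈ D, ∀ y ∈ D, dist (t x) (t y) = if dist x y < δ then 0 else dist x y

/-- Up to `ε` on a finite set `A`, every tuple of isometries agrees with a tuple preserving a
finite set. -/
theorem exists_finite_invariant (hE : FiniteApprox X) {n : ℕ} (A : Finset X)
    (u : Fin n → X ≃ᵢ X) {ε : ℝ} (hε : 0 < ε) :
    ∃ (B : Finset X) (w₀ : Fin n → X ≃ᵢ X), (∀ i x, w₀ i x ∈ B ↔ x ∈ B) ∧
      ∀ x ∈ A, ∃ b ∈ B, dist x b < ε ∧ ∀ i, dist (w₀ i b) (u i x) < ε := by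
  classical
  obtain ⟨B, t, hBs, ht, hd⟩ := hE (A ∪ Finset.univ.biUnion fun i => A.image (u i)) ε hε
  have m1 : ∀ x ∈ A, x ∈ A ∪ Finset.univ.biUnion fun i => A.image (u i) := fun x hx =>
    Finset.mem_union_left _ hx
  have m2 : ∀ i, ∀ x ∈ A, u i x ∈ A ∪ Finset.univ.biUnion fun i => A.image (u i) :=
    fun i x hx => Finset.mem_union_right _ (Finset.mem_biUnion.2
          ⟨i, Finset.mem_univ _, Finset.mem_image_of_mem _ hx⟩)
  have hex : ∀ i, ∃ g : X ≃ᵢ X, (∀ x ∈ A, g (t x) = t (u i x)) ∧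
      ∀ x, g x ∈ (B : Set X) ↔ x ∈ (B : Set X) := fun i =>
    exists_extension hBs A t (fun x => t (u i x)) (fun x hx => (ht x (m1 x hx)).1)
      (fun x hx => (ht _ (m2 i x hx)).1) (fun x hx y hy => by
        rw [hd x (m1 x hx) y (m1 y hy), hd _ (m2 i x hx) _ (m2 i y hy), (u i).dist_eq])
  choose w₀ hw hwB using hex
  refine ⟨B, w₀, hwB, fun x hx => ⟨t x, (ht x (m1 x hx)).1, (ht x (m1 x hx)).2, fun i => ?_⟩⟩
  rw [hw i x hx, dist_comm]
  exact (ht _ (m2 i x hx)).2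

/-- Extension together with amalgamation gives ample generics. Arbitrarily small levels (`hL₁`) give
local transitivity, arbitrarily large ones (`hL₂`) give topological transitivity. -/
theorem hasAmpleGenerics_of_amalgamation [CompleteSpace X] [TopologicalSpace.SeparableSpace X]
    [Nonempty X] (huniv : SwapOn (univ : Set X)) (hE : FiniteApprox X)
    (hL₁ : ∀ ε : ℝ, 0 < ε → ∃ ε' < ε, AmalgLevel X ε' ∧ ∀ x : X, IsOpen (closedBall x ε'))
    (hL₂ : ∀ D : Finset X, ∃ ε, AmalgLevel X ε ∧ ∀ x ∈ D, ∀ y ∈ D, dist x y ≤ ε) :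
    HasAmpleGenerics (X ≃ᵢ X) := by
  classical
  intro n
  let a : (X ≃ᵢ X) → (Fin (n + 1) → X ≃ᵢ X) → (Fin (n + 1) → X ≃ᵢ X) :=
    fun g w i => g * w i * g⁻¹
  -- A tuple `w₃` supplied by `exists_amalgam` links neighbourhoods of `w₁` and `w₂`.
  have link : ∀ (U₁ U₂ : Set (Fin (n + 1) → X ≃ᵢ X)) (w₁ w₂ : Fin (n + 1) → X ≃ᵢ X),
      IsOpen U₁ → IsOpen U₂ → w₁ ∈ U₁ → w₂ ∈ U₂ → ∀ (ε : ℝ) (_ : AmalgLevel X ε) (B : Finset X)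
      (_ : B.Nonempty) (w₀ : Fin (n + 1) → X ≃ᵢ X) (_ : ∀ i x, w₀ i x ∈ B ↔ x ∈ B)
      (_ : ∀ i, ∀ b ∈ B, dist (w₁ i b) (w₀ i b) ≤ ε)
      (_ : ∀ i, ∀ b ∈ B, dist (w₂ i b) (w₀ i b) ≤ ε),
      ∃ h : X ≃ᵢ X, (∀ b ∈ B, dist (h b) b ≤ ε) ∧ ∃ w ∈ U₁, a h w ∈ U₂ := by
    intro U₁ U₂ w₁ w₂ hU₁ hU₂ hw₁ hw₂ ε hε B hB w₀ hw₀ h1 h2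
    obtain ⟨A₁, ε₁, hε₁, hA₁⟩ := iso_pi_nhds (hU₁.mem_nhds hw₁)
    obtain ⟨A₂, ε₂, hε₂, hA₂⟩ := iso_pi_nhds (hU₂.mem_nhds hw₂)
    obtain ⟨h, w₃, hh, e2, e1⟩ := exists_amalgam huniv hε B A₁ A₂ hB w₀ w₁ w₂ hw₀ h1 h2
    refine ⟨h, hh, fun i => h⁻¹ * w₃ i * h, hA₁ _ fun i x hx => ?_, hA₂ _ fun i x hx => ?_⟩
    · rw [IsometryEquiv.mul_apply, IsometryEquiv.mul_apply, e1 i x hx,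
        IsometryEquiv.inv_apply_self, dist_self]
      exact hε₁
    · have : a h (fun i => h⁻¹ * w₃ i * h) i = w₃ i := by simp only [a]; group
      rw [this, e2 i x hx, dist_self]
      exact hε₂
  suffices H : ∃ y, {y' | ∃ g, y' = a g y} ∈ residual (Fin (n + 1) → X ≃ᵢ X) by
    obtain ⟨v, hv⟩ := H
    refine ⟨v, Filter.mem_of_superset hv ?_⟩
    rintro w ⟨g, rfl⟩
    exact ⟨g, fun i => rfl⟩
  refine exists_comeager_orbit (a := a) (fun w => by funext i; simp [a])
    (fun g h w => by funext i; simp only [a]; group) (fun g => ?_) (fun w => ?_) iso_complete ?_ ?_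
  · exact continuous_pi fun i => ((continuous_const.mul (continuous_apply i)).mul continuous_const)
  · exact continuous_pi fun i => ((continuous_id.mul continuous_const).mul continuous_inv)
  · intro V hV U hU ⟨u, hu⟩
    obtain ⟨A, ε, hε, hA⟩ := iso_pi_nhds (hU.mem_nhds hu)
    obtain ⟨A', ε', hε', hA'⟩ := iso_pi_nhds (n := 1) (u := fun _ => 1)
      (U := {w | w 0 ∈ V}) ((continuous_apply (0 : Fin 1)).continuousAt hV)
    let c : X := Classical.arbitrary X
    let δ := min ε ε'
    have hδ : 0 < δ := lt_min hε hε'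
    obtain ⟨B, w₀, hw₀, hB⟩ := exists_finite_invariant hE (insert c (A ∪ A')) u hδ
    obtain ⟨η, hηδ, hη, hηo⟩ := hL₁ δ hδ
    have hBne : B.Nonempty := by
      obtain ⟨b, hb, -⟩ := hB c (by simp)
      exact ⟨b, hb⟩
    refine ⟨{w | ∀ i, ∀ b ∈ B, w i b ∈ closedBall (w₀ i b) η}, fun w hw => hA w ?_, ?_, ?_, ?_⟩
    · intro i x hx
      obtain ⟨b, hb, hxb, hwb⟩ := hB x (by simp [hx])
      have h1 : dist (w i b) (w₀ i b) < δ := (mem_closedBall.1 (hw i b hb)).trans_lt hηδ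
      have h2 : dist (w i x) (w i b) < δ := by rwa [(w i).dist_eq]
      exact ((ultra_max _ (w i b) _).trans_lt (max_lt h2
        ((ultra_max _ (w₀ i b) _).trans_lt (max_lt h1 (hwb i))))).trans_le (min_le_left _ _)
    · simp only [ofPred_forall]
      refine isOpen_iInter_of_finite fun i => isOpen_biInter_finset fun b _ => ?_
      exact (hηo _).preimage ((iso_continuous_eval b).comp (continuous_apply i))
    · exact ⟨w₀, fun i b _ => mem_closedBall_self hη.1⟩
    · rintro U₁ U₂ hU₁ hU₂ h1 h2 ⟨w₁, hw₁⟩ ⟨w₂, hw₂⟩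
      obtain ⟨h, hh, w, hw⟩ := link U₁ U₂ w₁ w₂ hU₁ hU₂ hw₁ hw₂ η hη B hBne w₀ hw₀
        (h1 hw₁) (h2 hw₂)
      refine ⟨h, hA' (fun _ => h) fun _ x hx => ?_, w, hw⟩
      obtain ⟨b, hb, hxb, -⟩ := hB x (by simp [hx])
      have e1 : dist (h x) (h b) < δ := by rwa [h.dist_eq]
      have e2 : dist b x < δ := by rwa [dist_comm]
      exact ((ultra_max _ (h b) _).trans_lt (max_lt e1
        ((ultra_max _ b _).trans_lt (max_lt ((hh b hb).trans_lt hηδ) e2)))).trans_le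
          (min_le_right _ _)
  · rintro U₁ U₂ hU₁ hU₂ - - ⟨w₁, hw₁⟩ ⟨w₂, hw₂⟩
    let c : X := Classical.arbitrary X
    -- At a level exceeding all relevant distances, every two tuples agree on `{c}`.
    obtain ⟨ε, hε, hd⟩ := hL₂ (insert c ((Finset.univ.image fun i => w₁ i c) ∪
      Finset.univ.image fun i => w₂ i c))
    obtain ⟨h, -, hw⟩ := link U₁ U₂ w₁ w₂ hU₁ hU₂ hw₁ hw₂ ε hε {c} (Finset.singleton_nonempty c)
      (fun _ => 1) (fun i x => Iff.rfl)
      (fun i b hb => by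
        rw [Finset.mem_singleton.1 hb]
        exact hd _ (by simp) _ (by simp))
      (fun i b hb => by
        rw [Finset.mem_singleton.1 hb]
        exact hd _ (by simp) _ (by simp))
    exact ⟨h, trivial, hw⟩

end Ample

/-! ### Admissible levels -/

section Levels

variable {X : Type*} [MetricSpace X]

theorem le_dist_of_truncDist {ε m : ℝ} {z b : X} (hm : m ≤ truncDist ε z b) (hε : ε < m) :
    m ≤ dist z b := by
  rcases le_max_iff.1 hm with h | h
  · exact h
  · exact absurd h (not_le.2 hε)

theorem SameType.symm {ε : ℝ} {B : Finset X} {x y : X} (h : SameType ε B x y) :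
    SameType ε B y x := fun b hb => (h b hb).symm

theorem SameType.trans {ε : ℝ} {B : Finset X} {x y z : X} (h : SameType ε B x y)
    (h' : SameType ε B y z) : SameType ε B x z := fun b hb => (h b hb).trans (h' b hb)

theorem SameType.isNearest {ε : ℝ} {B : Finset X} {x y b : X} (h : SameType ε B x y)
    (hb : IsNearest ε B y b) : IsNearest ε B x b :=
  ⟨hb.1, fun b' hb' => by rw [h b hb.1, h b' hb']; exact hb.2 b' hb'⟩

variable [IsUltrametricDist X]

theorem dist_le_of_nearest {ε : ℝ} {B : Finset X} {y b x : X} (hb : IsNearest ε B y b)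
    (h : SameType ε B x y) : dist x y ≤ truncDist ε y b := by
  have h1 : dist x b ≤ truncDist ε y b := (h b hb.1) ▸ le_max_left _ _
  have h2 : dist b y ≤ truncDist ε y b := by rw [dist_comm]; exact le_max_left _ _
  exact (ultra_max x b y).trans (max_le h1 h2)

/-- A point closer to `y` than `y` is to `B` has the same type as `y`. -/
theorem sameType_of_lt {ε : ℝ} {B : Finset X} {y b x : X} (hb : IsNearest ε B y b)
    (h : dist x y < truncDist ε y b) : SameType ε B x y := by
  intro b' hb'
  by_contra hne
  have h1 := dist_of_truncDist_ne hne
  have h2 := hb.2 b' hb'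
  have h3 := le_max_right (truncDist ε x b') (truncDist ε y b')
  linarith

theorem sameType_map {ε : ℝ} {B : Finset X} {h : X ≃ᵢ X} (hh : ∀ b ∈ B, dist (h b) b ≤ ε) (y : X) :
    SameType ε B (h y) y := fun b hb => truncDist_map_of_close (hh b hb) y

/-- One step of the construction of the isometry required by `AmalgLevel`: the image `h y` of a new
point is corrected to `y'` by exchanging two small balls, which moves `B` by at most `ε` and does
not move the images of the points treated before. -/
theorem exists_correction (huniv : SwapOn (univ : Set X)) {ε : ℝ} {B D : Finset X} {h : X ≃ᵢ X}
    (hh : ∀ b ∈ B, dist (h b) b ≤ ε) {y b y' : X} (hb : IsNearest ε B y b)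
    (hy' : dist (h y) y' ≤ truncDist ε y b)
    (hD : ∀ x ∈ D, truncDist ε y b ≤ dist x y)
    (hD' : ∀ x ∈ D, truncDist ε y b ≤ dist (h x) y')
    (hB' : ∀ c ∈ B, ε < truncDist ε y b → truncDist ε y b ≤ dist c y') :
    ∃ h' : X ≃ᵢ X, (∀ b ∈ B, dist (h' b) b ≤ ε) ∧ h' y = y' ∧ ∀ x ∈ D, h' x = h x := by
  obtain ⟨k, hk, -, hkd, hkfix⟩ := exists_local_swap huniv (mem_univ (h y)) (mem_univ y')
  refine ⟨k * h, fun c hc => ?_, hk, fun x hx => ?_⟩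
  · have hkc : dist (k c) c ≤ ε := by
      rcases eq_or_lt_of_le (show ε ≤ truncDist ε y b from le_max_right _ _) with he | hlt
      · exact (hkd c).trans (hy'.trans he.symm.le)
      · have h1 : truncDist ε y b ≤ dist (h y) c := by
          refine le_dist_of_truncDist ?_ hlt
          rw [sameType_map hh y c hc]
          exact hb.2 c hc
        rw [hkfix c (hy'.trans (by rwa [dist_comm c])) (hy'.trans (hB' c hc hlt)), dist_self]
        exact (dist_nonneg).trans (hh c hc)
    have h2 : dist (k (h c)) (k c) ≤ ε := by rw [k.dist_eq]; exact hh c hc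
    exact (ultra_max _ (k c) _).trans (max_le h2 hkc)
  · exact hkfix (h x) (hy'.trans (by rw [h.dist_eq]; exact hD x hx)) (hy'.trans (hD' x hx))

/-- Infinite branching at every distance: any level that is a distance is admissible, and points
of equal type are placed at the maximal possible distance. -/
theorem amalgLevel_of_fresh (huniv : SwapOn (univ : Set X)) {R : Set ℝ}
    (hR : ∀ x y : X, dist x y = 0 ∨ dist x y ∈ R)
    (hfresh : ∀ r ∈ R, ∀ (z : X) (E : Finset X), ∃ y, dist z y ≤ r ∧ ∀ e ∈ E, r ≤ dist e y)
    {ε : ℝ} (h0 : 0 ≤ ε) (hε : ε = 0 ∨ ε ∈ R) : AmalgLevel X ε := by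
  classical
  refine ⟨h0, fun B D₁ D₂ hB => ⟨id, ?_⟩⟩
  induction D₁ using Finset.induction_on with
  | empty => exact ⟨1, fun b _ => by simpa using h0, by simp⟩
  | insert y D hyD ih =>
    obtain ⟨h, hh, hD⟩ := ih
    obtain ⟨b₀, hb₀⟩ := exists_isNearest ε hB y
    set m := truncDist ε y b₀ with hm
    -- All nearest points give the same value, so it suffices to treat `b₀`.
    have huniq : ∀ b, IsNearest ε B y b → truncDist ε y b = m := fun b hb =>
      le_antisymm (hb.2 b₀ hb₀.1) (hb₀.2 b hb.1)
    suffices ∃ h' : X ≃ᵢ X, (∀ b ∈ B, dist (h' b) b ≤ ε) ∧ (∀ x ∈ D, h' x = h x) ∧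
        ∀ x ∈ D₂, SameType ε B x y → dist x (h' y) = m by
      obtain ⟨h', hh', hfix, hnew⟩ := this
      refine ⟨h', hh', fun y' hy' x hx hT b hb => ?_⟩
      rcases Finset.mem_insert.1 hy' with rfl | hy'
      · rw [huniq b hb]; exact hnew x hx hT
      · rw [hfix y' hy']; exact hD y' hy' x hx hT b hb
    by_cases hA : ∃ y' ∈ D, dist y' y < m
    · obtain ⟨y', hy', hlt⟩ := hA
      refine ⟨h, hh, fun _ _ => rfl, fun x hx hT => ?_⟩
      have hT' := sameType_of_lt hb₀ hlt
      have e1 := hD y' hy' x hx (hT.trans hT'.symm) b₀ (hT'.isNearest hb₀)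
      rw [hT' b₀ hb₀.1] at e1
      have e2 : dist (h y) (h y') < dist (h y') x := by
        rw [dist_comm _ x, e1, h.dist_eq, dist_comm]; exact hlt
      rw [dist_comm, ultra_eq_of_lt e2, dist_comm, e1]
      rfl
    · push Not at hA
      have hmR : m = 0 ∨ m ∈ R := by
        rcases max_choice (dist y b₀) ε with h | h
        · rw [hm, truncDist, h]; exact hR _ _
        · rw [hm, truncDist, h]; exact hε
      have hm0 : 0 ≤ m := h0.trans (le_max_right _ _)
      obtain ⟨y', hy', hE⟩ : ∃ y', dist (h y) y' ≤ m ∧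
          ∀ e ∈ D.image h ∪ D₂ ∪ B, m ≤ dist e y' := by
        rcases hmR with h0 | h0
        · exact ⟨h y, by simpa using hm0, fun e _ => by rw [h0]; exact dist_nonneg⟩
        · exact hfresh m h0 _ _
      obtain ⟨h', hh', e1, e2⟩ := exists_correction huniv hh hb₀ hy' hA
        (fun x hx => hE _ (by simp only [Finset.mem_union]
                              exact Or.inl (Or.inl (Finset.mem_image_of_mem _ hx))))
        (fun c hc _ => hE _ (by simp [hc]))
      refine ⟨h', hh', e2, fun x hx hT => ?_⟩
      rw [e1]
      refine le_antisymm ?_ (hE x (by simp [hx]))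
      have h3 : dist x (h y) ≤ m := by
        have := dist_le_of_nearest (x := x) ((sameType_map hh y).isNearest hb₀)
          (hT.trans (sameType_map hh y).symm)
        rwa [sameType_map hh y b₀ hb₀.1] at this
      exact (ultra_max _ (h y) _).trans (max_le h3 hy')

/-- Binary branching with densely ordered distances: any positive level that is not a distance is
admissible. Points of equal type at distance `m` from `B` are at a distance less than `m` from each
other (`hbin`), and they are placed at a distance in `R` that is smaller than `m` but larger than
all distances below `m` between the given points. -/
theorem amalgLevel_of_binary (huniv : SwapOn (univ : Set X)) {R : Set ℝ}
    (hR : ∀ x y : X, dist x y = 0 ∨ dist x y ∈ R)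
    (hatt : ∀ r ∈ R, ∀ x : X, ∃ y, dist x y = r)
    (hbin : ∀ (x y z : X), 0 < dist x y → dist x y = dist x z → dist y z < dist x y)
    (hdense : ∀ s m : ℝ, 0 ≤ s → s < m → ∃ r ∈ R, s < r ∧ r < m)
    {ε : ℝ} (h0 : 0 < ε) (hε : ε ∉ R) : AmalgLevel X ε := by
  classical
  refine ⟨h0.le, fun B D₁ D₂ hB => ?_⟩
  -- `ρ m` lies below `m` and above all distances smaller than `m` between the given points.
  have hρ : ∀ m : ℝ, 0 < m → ∃ r ∈ R, r < m ∧ ∀ x ∈ D₁ ∪ D₂, ∀ y ∈ D₁ ∪ D₂,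
      dist x y < m → dist x y < r := by
    intro m hm
    let S := insert (0 : ℝ) ((((D₁ ∪ D₂) ×ˢ (D₁ ∪ D₂)).image fun p => dist p.1 p.2).filter (· < m))
    obtain ⟨s, hs, hsm⟩ := S.exists_max_image id ⟨0, Finset.mem_insert_self _ _⟩
    have hs0 : 0 ≤ s := hsm 0 (Finset.mem_insert_self _ _)
    have hslt : s < m := by
      rcases Finset.mem_insert.1 hs with rfl | hs
      · exact hm
      · exact (Finset.mem_filter.1 hs).2
    obtain ⟨r, hr, h1, h2⟩ := hdense s m hs0 hslt
    refine ⟨r, hr, h2, fun x hx y hy hxy => (hsm (dist x y) ?_).trans_lt h1⟩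
    exact Finset.mem_insert_of_mem (Finset.mem_filter.2 ⟨Finset.mem_image.2
      ⟨(x, y), Finset.mem_product.2 ⟨hx, hy⟩, rfl⟩, hxy⟩)
  choose! ρ hρR hρm hρD using hρ
  have hlt : ∀ x y b : X, IsNearest ε B y b → SameType ε B x y → dist x y < truncDist ε y b := by
    intro x y b hb hT
    have hle := dist_le_of_nearest hb hT
    refine lt_of_le_of_ne hle fun he => ?_
    rcases eq_or_lt_of_le (show ε ≤ truncDist ε y b from le_max_right _ _) with h | h
    · rw [← h] at he
      rcases hR x y with h' | h'
      · linarith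
      · exact hε (he ▸ h')
    · have key : ∀ z, ε < truncDist ε z b → truncDist ε z b = dist b z := by
        intro z hz
        rw [dist_comm]
        exact le_antisymm (le_dist_of_truncDist le_rfl hz) (le_max_left _ _)
      have hx := key x (by rwa [hT b hb.1])
      have hy := key y h
      have := hbin b x y (by rw [← hx, hT b hb.1]; linarith) (by rw [← hx, ← hy, hT b hb.1])
      rw [← hx, hT b hb.1, he] at this
      exact lt_irrefl _ this
  suffices ∀ D ⊆ D₁, ∃ h : X ≃ᵢ X, (∀ b ∈ B, dist (h b) b ≤ ε) ∧ ∀ y ∈ D, ∀ x ∈ D₂,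
      SameType ε B x y → ∀ b, IsNearest ε B y b → dist x (h y) = ρ (truncDist ε y b) from
    ⟨ρ, this D₁ subset_rfl⟩
  intro D hDD
  induction D using Finset.induction_on with
  | empty => exact ⟨1, fun b _ => by simpa using h0.le, by simp⟩
  | insert y D hyD ih =>
    obtain ⟨h, hh, hD⟩ := ih ((Finset.subset_insert _ _).trans hDD)
    obtain ⟨b₀, hb₀⟩ := exists_isNearest ε hB y
    set m := truncDist ε y b₀ with hm
    have hm0 : 0 < m := h0.trans_le (le_max_right _ _)
    have hyD₁ : y ∈ D₁ := hDD (Finset.mem_insert_self _ _)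
    have huniq : ∀ b, IsNearest ε B y b → truncDist ε y b = m := fun b hb =>
      le_antisymm (hb.2 b₀ hb₀.1) (hb₀.2 b hb.1)
    suffices ∃ h' : X ≃ᵢ X, (∀ b ∈ B, dist (h' b) b ≤ ε) ∧ (∀ x ∈ D, h' x = h x) ∧
        ∀ x ∈ D₂, SameType ε B x y → dist x (h' y) = ρ m by
      obtain ⟨h', hh', hfix, hnew⟩ := this
      refine ⟨h', hh', fun y' hy' x hx hT b hb => ?_⟩
      rcases Finset.mem_insert.1 hy' with rfl | hy'
      · rw [huniq b hb]; exact hnew x hx hT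
      · rw [hfix y' hy']; exact hD y' hy' x hx hT b hb
    by_cases hA : ∃ y' ∈ D, dist y' y < m
    · obtain ⟨y', hy', hlt'⟩ := hA
      refine ⟨h, hh, fun _ _ => rfl, fun x hx hT => ?_⟩
      have hT' := sameType_of_lt hb₀ hlt'
      have e1 := hD y' hy' x hx (hT.trans hT'.symm) b₀ (hT'.isNearest hb₀)
      rw [hT' b₀ hb₀.1] at e1
      have e2 : dist (h y) (h y') < dist (h y') x := by
        rw [dist_comm _ x, e1, h.dist_eq, dist_comm]
        exact hρD m hm0 _ (Finset.mem_union_left _ (hDD (Finset.mem_insert_of_mem hy'))) _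
          (Finset.mem_union_left _ hyD₁) hlt'
      rw [dist_comm, ultra_eq_of_lt e2, dist_comm, e1]
    · push Not at hA
      by_cases hx₀ : ∃ x₀ ∈ D₂, SameType ε B x₀ y
      · obtain ⟨x₀, hx₀D, hx₀T⟩ := hx₀
        obtain ⟨y', hy'⟩ := hatt (ρ m) (hρR m hm0) x₀
        have hx₀m : ∀ c ∈ B, m ≤ truncDist ε x₀ c := fun c hc => by
          rw [hx₀T c hc]; exact hb₀.2 c hc
        -- Points at distance at least `m` from `x₀` are equally far from `y'`.
        have hfar : ∀ z, m ≤ dist z x₀ → m ≤ dist z y' := by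
          intro z hz
          have h1 : dist y' x₀ < dist x₀ z := by
            rw [dist_comm y', hy', dist_comm x₀ z]; exact (hρm m hm0).trans_le hz
          rw [dist_comm z y', ultra_eq_of_lt h1, dist_comm]; exact hz
        obtain ⟨h', hh', e1, e2⟩ := exists_correction (y' := y') huniv hh hb₀ (by
            have h1 := hlt x₀ (h y) b₀ ((sameType_map hh y).isNearest hb₀)
              (hx₀T.trans (sameType_map hh y).symm)
            rw [sameType_map hh y b₀ hb₀.1] at h1
            refine (ultra_max _ x₀ _).trans (max_le ?_ ?_)
            · rw [dist_comm]; exact h1.le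
            · rw [hy']; exact (hρm m hm0).le) hA
          (fun x hx => by
            refine hfar _ ?_
            by_contra hlt'
            have hT1 : SameType ε B (h x) x₀ :=
              sameType_of_lt (hx₀T.isNearest hb₀) (by rw [hx₀T b₀ hb₀.1]; exact not_le.1 hlt')
            exact absurd (hlt x y b₀ hb₀ (((sameType_map hh x).symm.trans hT1).trans hx₀T))
              (not_lt.2 (hA x hx)))
          (fun c hc hlt' => by
            refine hfar _ ?_
            rw [dist_comm]
            exact le_dist_of_truncDist (hx₀m c hc) hlt')
        refine ⟨h', hh', e2, fun x hx hT => ?_⟩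
        rw [e1]
        have h2 := hlt x x₀ b₀ (hx₀T.isNearest hb₀) (hT.trans hx₀T.symm)
        rw [hx₀T b₀ hb₀.1] at h2
        have h3 := hρD m hm0 x (Finset.mem_union_right _ hx) x₀ (Finset.mem_union_right _ hx₀D) h2
        rw [← hy'] at h3
        rw [ultra_eq_of_lt h3, hy']
      · exact ⟨h, hh, fun _ _ => rfl, fun x hx hT => absurd ⟨x, hx, hT⟩ hx₀⟩

end Levels

/-! ### Spaces of sequences indexed by a set of distances -/

section Coordinates

/-- The map `c` identifies `X` with the space of sequences in `A ^ R` whose restriction to each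
`(r, ∞)` with `r > 0` has finite support, the distance of two sequences being the largest index
at which they differ. This covers `X_R` with `A = ℕ` and `X^n_R` with `A = {0, …, n - 1}`. -/
structure Coordinates {X : Type*} [MetricSpace X] {R : Set ℝ} (A : Set ℕ) (c : X → R → ℕ) :
    Prop where
  countable : R.Countable
  pos : ∀ p : R, 0 < (p : ℝ)
  zero_mem : 0 ∈ A
  inj : Function.Injective c
  mem : ∀ x p, c x p ∈ A
  fin : ∀ x, ∀ r : ℝ, 0 < r → {p : R | r < (p : ℝ) ∧ c x p ≠ 0}.Finite
  surj : ∀ f : R → ℕ, (∀ p, f p ∈ A) →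
    (∀ r : ℝ, 0 < r → {p : R | r < (p : ℝ) ∧ f p ≠ 0}.Finite) → ∃ x, c x = f
  dist_eq : ∀ x y, x ≠ y → dist x y = sSup {r : ℝ | ∃ h : r ∈ R, c x ⟨r, h⟩ ≠ c y ⟨r, h⟩}

namespace Coordinates

variable {X : Type*} [MetricSpace X] {R : Set ℝ} {A : Set ℕ} {c : X → R → ℕ}

theorem finite_ne (h : Coordinates A c) (x y : X) {r : ℝ} (hr : 0 < r) :
    {p : R | r < (p : ℝ) ∧ c x p ≠ c y p}.Finite := by
  refine ((h.fin x r hr).union (h.fin y r hr)).subset ?_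
  rintro p ⟨hp, hne⟩
  by_cases hx : c x p = 0
  · exact Or.inr ⟨hp, fun hy => hne (hx.trans hy.symm)⟩
  · exact Or.inl ⟨hp, hx⟩

theorem exists_max (h : Coordinates A c) {x y : X} (hxy : x ≠ y) :
    ∃ p : R, c x p ≠ c y p ∧ dist x y = p ∧ ∀ q : R, (p : ℝ) < q → c x q = c y q := by
  obtain ⟨p₀, hp₀⟩ : ∃ p, c x p ≠ c y p := by
    by_contra hcon
    push Not at hcon
    exact hxy (h.inj (funext hcon))
  have h0 := h.pos p₀
  obtain ⟨p, ⟨hp, hpne⟩, hmax⟩ := Set.exists_max_image _ (fun q : R => (q : ℝ))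
    (h.finite_ne x y (half_pos h0)) ⟨p₀, half_lt_self h0, hp₀⟩
  have key : ∀ q : R, (p : ℝ) < q → c x q = c y q := by
    intro q hq
    by_contra hne
    exact absurd (hmax q ⟨hp.trans hq, hne⟩) (not_le.2 hq)
  refine ⟨p, hpne, ?_, key⟩
  rw [h.dist_eq x y hxy]
  refine IsGreatest.csSup_eq ⟨⟨p.2, hpne⟩, ?_⟩
  rintro r ⟨hr, hne⟩
  by_contra hlt
  exact hne (key ⟨r, hr⟩ (not_le.1 hlt))

theorem le_dist (h : Coordinates A c) {x y : X} {p : R} (hp : c x p ≠ c y p) :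
    (p : ℝ) ≤ dist x y := by
  obtain ⟨q, -, hd, hq⟩ := h.exists_max (x := x) (y := y) (fun he => hp (by rw [he]))
  rw [hd]
  by_contra hlt
  exact hp (hq p (not_le.1 hlt))

theorem dist_le_iff (h : Coordinates A c) {x y : X} {r : ℝ} (hr : 0 ≤ r) :
    dist x y ≤ r ↔ ∀ p : R, r < p → c x p = c y p := by
  constructor
  · intro hd p hp
    by_contra hne
    exact absurd (h.le_dist hne) (not_le.2 (hd.trans_lt hp))
  · intro H
    by_cases hxy : x = y
    · rw [hxy, dist_self]; exact hr
    · obtain ⟨p, hne, hd, -⟩ := h.exists_max hxy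
      rw [hd]
      by_contra hlt
      exact hne (H p (not_le.1 hlt))

theorem dist_lt_iff (h : Coordinates A c) {x y : X} {r : ℝ} (hr : 0 < r) :
    dist x y < r ↔ ∀ p : R, r ≤ p → c x p = c y p := by
  constructor
  · intro hd p hp
    by_contra hne
    exact absurd (h.le_dist hne) (not_le.2 (hd.trans_le hp))
  · intro H
    by_cases hxy : x = y
    · rw [hxy, dist_self]; exact hr
    · obtain ⟨p, hne, hd, -⟩ := h.exists_max hxy
      rw [hd]
      by_contra hlt
      exact hne (H p (not_lt.1 hlt))

theorem dist_congr (h : Coordinates A c) {x y x' y' : X}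
    (H : ∀ p, c x p = c y p ↔ c x' p = c y' p) : dist x y = dist x' y' :=
  le_antisymm
    ((h.dist_le_iff dist_nonneg).2 fun p hp =>
      (H p).2 ((h.dist_le_iff dist_nonneg).1 le_rfl p hp))
    ((h.dist_le_iff dist_nonneg).2 fun p hp =>
      (H p).1 ((h.dist_le_iff dist_nonneg).1 le_rfl p hp))

theorem dist_mem (h : Coordinates A c) (x y : X) : dist x y = 0 ∨ dist x y ∈ R := by
  by_cases hxy : x = y
  · left; rw [hxy, dist_self]
  · obtain ⟨p, -, hd, -⟩ := h.exists_max hxy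
    right; rw [hd]; exact p.2

theorem isUltrametricDist (h : Coordinates A c) : IsUltrametricDist X := by
  refine ⟨fun x y z => (h.dist_le_iff (le_max_of_le_left dist_nonneg)).2 fun p hp => ?_⟩
  exact ((h.dist_le_iff dist_nonneg).1 le_rfl p ((le_max_left _ _).trans_lt hp)).trans
    ((h.dist_le_iff dist_nonneg).1 le_rfl p ((le_max_right _ _).trans_lt hp))

theorem nonempty (h : Coordinates A c) : Nonempty X := by
  obtain ⟨x, -⟩ := h.surj (fun _ => 0) (fun _ => h.zero_mem) (fun r _ => by simp)
  exact ⟨x⟩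

theorem completeSpace (h : Coordinates A c) : CompleteSpace X := by
  refine Metric.complete_of_cauchySeq_tendsto fun u hu => ?_
  have hM : ∀ r : ℝ, 0 < r → ∃ M, ∀ n ≥ M, ∀ p : R, r ≤ p → c (u n) p = c (u M) p := by
    intro r hr
    obtain ⟨M, hM⟩ := Metric.cauchySeq_iff'.1 hu r hr
    exact ⟨M, fun n hn => (h.dist_lt_iff hr).1 (hM n hn)⟩
  choose! M hM using hM
  -- The limit takes the eventual value of each coordinate.
  have hf : ∀ r : ℝ, 0 < r → ∀ p : R, r ≤ p → c (u (M p)) p = c (u (M r)) p := by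
    intro r hr p hp
    rw [← hM p (h.pos p) _ (le_max_left (M p) (M r)) p le_rfl,
      ← hM r hr _ (le_max_right (M p) (M r)) p hp]
  obtain ⟨x, hx⟩ := h.surj (fun p => c (u (M p)) p) (fun p => h.mem _ _) (fun r hr => by
    refine (h.fin (u (M r)) r hr).subset ?_
    rintro p ⟨hp, hne⟩
    exact ⟨hp, by rwa [hf r hr p hp.le] at hne⟩)
  refine ⟨x, Metric.tendsto_atTop.2 fun r hr => ⟨M r, fun n hn => (h.dist_lt_iff hr).2 ?_⟩⟩
  intro p hp
  rw [hM r hr n hn p hp, hx]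
  exact (hf r hr p hp).symm

theorem separableSpace (h : Coordinates A c) : TopologicalSpace.SeparableSpace X := by
  classical
  have : Countable R := h.countable.to_subtype
  refine ⟨c ⁻¹' range (fun f : R →₀ ℕ => (f : R → ℕ)),
    (countable_range _).preimage_of_injOn h.inj.injOn, Metric.dense_iff.2 fun x r hr => ?_⟩
  have hfin := h.fin x (r / 2) (half_pos hr)
  have hsub : ∀ p : R, (if r / 2 < (p : ℝ) then c x p else 0) ≠ 0 →
      p ∈ {p : R | r / 2 < (p : ℝ) ∧ c x p ≠ 0} := by
    intro p hp
    split_ifs at hp with h1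
    · exact ⟨h1, hp⟩
    · exact absurd rfl hp
  obtain ⟨y, hy⟩ := h.surj (fun p => if r / 2 < (p : ℝ) then c x p else 0)
    (fun p => by
      split_ifs
      · exact h.mem _ _
      · exact h.zero_mem)
    (fun s _ => hfin.subset fun p hp => hsub p hp.2)
  refine ⟨y, ?_, Finsupp.ofSupportFinite (c y) (hfin.subset fun p hp => hsub p ?_), rfl⟩
  · rw [mem_ball, h.dist_lt_iff hr]
    intro p hp
    rw [hy]
    exact if_pos ((half_lt_self hr).trans_le hp)
  · rw [Function.mem_support, hy] at hp
    exact hp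

/-- Exchanging the values `c y p` and `c y' p` at each index `p` is an involutive isometry. -/
theorem exists_swap (h : Coordinates A c) (y y' : X) : ∃ σ : X ≃ᵢ X,
    ∀ x p, c (σ x) p = Equiv.swap (c y p) (c y' p) (c x p) := by
  have hex : ∀ x, ∃ x', c x' = fun p => Equiv.swap (c y p) (c y' p) (c x p) := by
    intro x
    refine h.surj _ (fun p => ?_) (fun r hr => ?_)
    · rw [Equiv.swap_apply_def]
      split_ifs
      · exact h.mem _ _
      · exact h.mem _ _
      · exact h.mem _ _
    · refine (((h.fin x r hr).union (h.fin y r hr)).union (h.fin y' r hr)).subset ?_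
      rintro p ⟨hp, hne⟩
      by_contra hcon
      simp only [mem_union, mem_ofPred_eq, hp, true_and, not_or, not_not] at hcon
      rw [hcon.1.1, hcon.1.2, hcon.2] at hne
      simp at hne
  choose σ hσ using hex
  have hinv : ∀ x, σ (σ x) = x := by
    intro x
    refine h.inj (funext fun p => ?_)
    rw [hσ, hσ]
    exact Equiv.swap_apply_self _ _ _
  refine ⟨IsometryEquiv.mk' σ σ hinv (Isometry.of_dist_eq fun x x' => ?_), fun x p => ?_⟩
  · refine h.dist_congr fun p => ?_
    rw [hσ, hσ]
    exact (Equiv.swap _ _).injective.eq_iff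
  · exact congrFun (hσ x) p

/-- A set described by conditions on the single coordinates is preserved by coordinatewise
swaps between its points. -/
theorem swapOn (h : Coordinates A c) (P : R → ℕ → Prop) : SwapOn {x | ∀ p, P p (c x p)} := by
  intro y hy y' hy'
  obtain ⟨σ, hσ⟩ := h.exists_swap y y'
  refine ⟨σ, ?_, fun x => ?_, fun x hx p => ?_⟩
  · exact h.inj (funext fun p => by rw [hσ, Equiv.swap_apply_left])
  · exact h.inj (funext fun p => by rw [hσ, hσ, Equiv.swap_apply_self])
  · rw [hσ, Equiv.swap_apply_def]
    split_ifs
    · exact hy' p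
    · exact hy p
    · exact hx p

theorem swapOn_univ (h : Coordinates A c) : SwapOn (univ : Set X) := by
  have := h.swapOn fun _ _ => True
  simpa using this

/-- Only finitely many indices `p ≥ δ` distinguish points of `D`. Forgetting all other coordinates
maps `D` into the finite set of sequences that take, at each of these indices, a value taken by a
point of `D`. -/
theorem finiteApprox (h : Coordinates A c) : FiniteApprox X := by
  classical
  intro D δ hδ
  rcases D.eq_empty_or_nonempty with rfl | ⟨d₀, hd₀⟩
  · exact ⟨∅, id, by simp [SwapOn], by simp, by simp⟩
  let S : Set R := {p | δ ≤ (p : ℝ) ∧ ∃ x ∈ D, ∃ y ∈ D, c x p ≠ c y p}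
  have hS : S.Finite := by
    refine (D.finite_toSet.biUnion fun x _ => D.finite_toSet.biUnion fun y _ =>
      h.finite_ne x y (half_pos hδ)).subset ?_
    rintro p ⟨hp, x, hx, y, hy, hne⟩
    exact mem_biUnion hx (mem_biUnion hy ⟨(half_lt_self hδ).trans_le hp, hne⟩)
  let P : R → ℕ → Prop := fun p k => (p ∉ S → k = c d₀ p) ∧ (p ∈ S → ∃ d ∈ D, c d p = k)
  have hB : {x | ∀ p, P p (c x p)}.Finite := by
    have : Finite S := hS.to_subtype
    refine Set.Finite.of_finite_image (f := fun x (p : S) => c x p)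
      ((Set.Finite.pi' (t := fun p : S => (fun d => c d p) '' (D : Set X))
        fun p => D.finite_toSet.image _).subset ?_) ?_
    · rintro _ ⟨x, hx, rfl⟩ p
      obtain ⟨d, hd, he⟩ := (hx p).2 p.2
      exact ⟨d, hd, he⟩
    · intro x hx y hy hxy
      refine h.inj (funext fun p => ?_)
      by_cases hp : p ∈ S
      · exact congrFun hxy ⟨p, hp⟩
      · rw [(hx p).1 hp, (hy p).1 hp]
  have hex : ∀ x, ∃ x', c x' = fun p => if p ∈ S then c x p else c d₀ p := by
    intro x
    refine h.surj _ (fun p => ?_) (fun r hr => ?_)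
    · split_ifs
      · exact h.mem _ _
      · exact h.mem _ _
    · refine ((h.fin x r hr).union (h.fin d₀ r hr)).subset ?_
      rintro p ⟨hp, hne⟩
      split_ifs at hne
      · exact Or.inl ⟨hp, hne⟩
      · exact Or.inr ⟨hp, hne⟩
  choose t ht using hex
  have ht₁ : ∀ x, ∀ p ∈ S, c (t x) p = c x p := fun x p hp => by rw [ht]; exact if_pos hp
  have ht₂ : ∀ x, ∀ p ∉ S, c (t x) p = c d₀ p := fun x p hp => by rw [ht]; exact if_neg hp
  refine ⟨hB.toFinset, t, ?_, fun x hx => ⟨?_, ?_⟩, fun x hx y hy => ?_⟩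
  · rw [hB.coe_toFinset]
    exact h.swapOn P
  · rw [hB.mem_toFinset]
    exact fun p => ⟨ht₂ x p, fun hp => ⟨x, hx, (ht₁ x p hp).symm⟩⟩
  · rw [h.dist_lt_iff hδ]
    intro p hp
    by_cases hpS : p ∈ S
    · exact (ht₁ x p hpS).symm
    · rw [ht₂ x p hpS]
      by_contra hne
      exact hpS ⟨hp, x, hx, d₀, hd₀, hne⟩
  · split_ifs with hxy
    · have : t x = t y := by
        refine h.inj (funext fun p => ?_)
        by_cases hpS : p ∈ S
        · rw [ht₁ x p hpS, ht₁ y p hpS]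
          exact (h.dist_lt_iff hδ).1 hxy p hpS.1
        · rw [ht₂ x p hpS, ht₂ y p hpS]
      rw [this, dist_self]
    · push Not at hxy
      obtain ⟨p, hne, hd, hagree⟩ := h.exists_max (x := x) (y := y) (by
        rintro rfl
        rw [dist_self] at hxy
        linarith)
      have hpS : p ∈ S := ⟨hd ▸ hxy, x, hx, y, hy, hne⟩
      rw [hd]
      refine le_antisymm ((h.dist_le_iff (h.pos p).le).2 fun q hq => ?_) (h.le_dist ?_)
      · by_cases hqS : q ∈ S
        · rw [ht₁ x q hqS, ht₁ y q hqS]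
          exact hagree q hq
        · rw [ht₂ x q hqS, ht₂ y q hqS]
      · rwa [ht₁ x p hpS, ht₁ y p hpS]

theorem exists_update (h : Coordinates A c) (z : X) (p : R) {k : ℕ} (hk : k ∈ A) :
    ∃ y, c y p = k ∧ ∀ q, q ≠ p → c y q = c z q := by
  classical
  obtain ⟨y, hy⟩ := h.surj (Function.update (c z) p k)
    (fun q => by
      rcases eq_or_ne q p with rfl | hq
      · simpa using hk
      · rw [Function.update_of_ne hq]; exact h.mem _ _)
    (fun r hr => by
      refine ((h.fin z r hr).union (finite_singleton p)).subset ?_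
      rintro q ⟨hq, hne⟩
      rcases eq_or_ne q p with rfl | hqp
      · exact Or.inr rfl
      · rw [Function.update_of_ne hqp] at hne
        exact Or.inl ⟨hq, hne⟩)
  exact ⟨y, by rw [hy, Function.update_self], fun q hq => by rw [hy, Function.update_of_ne hq]⟩

/-- Ample generics for sequences of arbitrary natural numbers: all distances, and `0`, are
admissible levels. -/
theorem hasAmpleGenerics_univ {c : X → R → ℕ} (h : Coordinates univ c) :
    HasAmpleGenerics (X ≃ᵢ X) := by
  classical
  have := h.isUltrametricDist
  have := h.completeSpace
  have := h.separableSpace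
  have := h.nonempty
  have hlevel : ∀ ε : ℝ, (ε = 0 ∨ ε ∈ R) → AmalgLevel X ε := by
    intro ε hε
    refine amalgLevel_of_fresh h.swapOn_univ h.dist_mem (fun r hr z E => ?_) ?_ hε
    · obtain ⟨k, hk⟩ := Infinite.exists_notMem_finset (E.image fun e => c e ⟨r, hr⟩)
      obtain ⟨y, hy, hyz⟩ := h.exists_update z ⟨r, hr⟩ (mem_univ k)
      refine ⟨y, (h.dist_le_iff (h.pos ⟨r, hr⟩).le).2 fun p hp => ?_, fun e he => ?_⟩
      · refine (hyz p ?_).symm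
        rintro rfl
        exact lt_irrefl _ hp
      · refine h.le_dist (p := ⟨r, hr⟩) fun heq => hk ?_
        rw [← hy, ← heq]
        exact Finset.mem_image_of_mem (fun e => c e ⟨r, hr⟩) he
    · rcases hε with rfl | hε
      · exact le_rfl
      · exact (h.pos ⟨ε, hε⟩).le
  refine hasAmpleGenerics_of_amalgamation h.swapOn_univ h.finiteApprox (fun ε hε => ?_)
    (fun D => ?_)
  · by_cases hex : ∃ r ∈ R, r < ε
    · obtain ⟨r, hr, hrε⟩ := hex
      exact ⟨r, hrε, hlevel r (Or.inr hr), fun x =>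
        IsUltrametricDist.isOpen_closedBall x (h.pos ⟨r, hr⟩).ne'⟩
    · -- No distance lies in `(0, ε)`, so `X` is discrete.
      push Not at hex
      refine ⟨0, hε, hlevel 0 (Or.inl rfl), fun x => ?_⟩
      have : closedBall x 0 = ball x ε := by
        ext y
        rw [mem_closedBall, mem_ball]
        refine ⟨fun hy => hy.trans_lt hε, fun hy => ?_⟩
        rcases h.dist_mem y x with h0 | h0
        · exact h0.le
        · exact absurd hy (not_lt.2 (hex _ h0))
      rw [this]
      exact isOpen_ball
  · let E := insert (0 : ℝ) ((D ×ˢ D).image fun p => dist p.1 p.2)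
    obtain ⟨s, hs, hsm⟩ := E.exists_max_image id ⟨0, Finset.mem_insert_self _ _⟩
    refine ⟨s, hlevel s ?_, fun x hx y hy => hsm _ (Finset.mem_insert_of_mem
      (Finset.mem_image.2 ⟨(x, y), Finset.mem_product.2 ⟨hx, hy⟩, rfl⟩))⟩
    rcases Finset.mem_insert.1 hs with hs | hs
    · exact Or.inl hs
    · obtain ⟨p, -, rfl⟩ := Finset.mem_image.1 hs
      exact h.dist_mem _ _

/-- Ample generics for binary sequences over the positive rationals: all positive irrational levels
are admissible. -/
theorem hasAmpleGenerics_binary {c : X → QPos → ℕ} (h : Coordinates {k | k < 2} c) :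
    HasAmpleGenerics (X ≃ᵢ X) := by
  classical
  have := h.isUltrametricDist
  have := h.completeSpace
  have := h.separableSpace
  have := h.nonempty
  have hlevel : ∀ ε : ℝ, 0 < ε → Irrational ε → AmalgLevel X ε := by
    intro ε h0 hirr
    refine amalgLevel_of_binary h.swapOn_univ h.dist_mem (fun r hr x => ?_) (fun x y z h0 he => ?_)
      (fun s m hs hsm => ?_) h0 ?_
    · obtain ⟨y, hy, hyx⟩ := h.exists_update x ⟨r, hr⟩ (k := 1 - c x ⟨r, hr⟩)
        (by simp only [mem_ofPred_eq]; omega)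
      refine ⟨y, le_antisymm ((h.dist_le_iff (h.pos ⟨r, hr⟩).le).2 fun p hp => ?_)
        (h.le_dist (p := ⟨r, hr⟩) ?_)⟩
      · refine (hyx p ?_).symm
        rintro rfl
        exact lt_irrefl _ hp
      · rw [hy]
        have := h.mem x ⟨r, hr⟩
        simp only [mem_ofPred_eq] at this
        omega
    · -- Both `y` and `z` differ from `x` at the index `dist x y`, hence agree there.
      obtain ⟨p, hp, hpd, hpa⟩ := h.exists_max (dist_pos.1 h0)
      obtain ⟨q, hq, hqd, hqa⟩ := h.exists_max (dist_pos.1 (he ▸ h0))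
      obtain rfl : p = q := Subtype.ext (by rw [← hpd, ← hqd, he])
      refine (h.dist_lt_iff h0).2 fun s hs => ?_
      rw [hpd] at hs
      rcases hs.eq_or_lt with hs | hs
      · obtain rfl : p = s := Subtype.ext hs
        have h1 := h.mem x p
        have h2 := h.mem y p
        have h3 := h.mem z p
        simp only [mem_ofPred_eq] at h1 h2 h3
        omega
      · rw [← hpa s hs, ← hqa s hs]
    · obtain ⟨q, hq₁, hq₂⟩ := exists_rat_btwn hsm
      exact ⟨q, ⟨q, by exact_mod_cast hs.trans_lt hq₁, rfl⟩, hq₁, hq₂⟩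
    · rintro ⟨q, -, hq⟩
      exact hirr ⟨q, hq⟩
  refine hasAmpleGenerics_of_amalgamation h.swapOn_univ h.finiteApprox (fun ε hε => ?_)
    (fun D => ?_)
  · obtain ⟨r, hr, h0, hrε⟩ := exists_irrational_btwn hε
    exact ⟨r, hrε, hlevel r h0 hr, fun x => IsUltrametricDist.isOpen_closedBall x h0.ne'⟩
  · let E := insert (0 : ℝ) ((D ×ˢ D).image fun p => dist p.1 p.2)
    obtain ⟨s, hs, hsm⟩ := E.exists_max_image id ⟨0, Finset.mem_insert_self _ _⟩
    obtain ⟨r, hr, hsr, -⟩ := exists_irrational_btwn (lt_add_one s)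
    refine ⟨r, hlevel r ((hsm 0 (Finset.mem_insert_self _ _)).trans_lt hsr) hr,
      fun x hx y hy => (hsm _ (Finset.mem_insert_of_mem (Finset.mem_image.2
        ⟨(x, y), Finset.mem_product.2 ⟨hx, hy⟩, rfl⟩))).trans hsr.le⟩

end Coordinates

end Coordinates

end UltraGen

open UltraGen in
theorem urysohn_iso_has_ample_generics :
    (∀ R : Set ℝ, R.Countable → R ⊆ Set.Ioi (0 : ℝ) →
      ∀ D : MetricSpace (UrysohnCarrier R),
        (∀ x y : UrysohnCarrier R, x ≠ y → D.dist x y = urysohnDist x y) →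
        letI := D
        HasAmpleGenerics (UrysohnCarrier R ≃ᵢ UrysohnCarrier R)) ∧
    (∀ D : MetricSpace (UrysohnCarrierN QPos 2),
        (∀ x y : UrysohnCarrierN QPos 2, x ≠ y → D.dist x y = urysohnDistN x y) →
        letI := D
        HasAmpleGenerics (UrysohnCarrierN QPos 2 ≃ᵢ UrysohnCarrierN QPos 2)) := by
  refine ⟨fun R hR hpos D hD => ?_, fun D hD => ?_⟩
  · exact Coordinates.hasAmpleGenerics_univ (c := fun x => x.1)
      { countable := hR
        pos := fun p => hpos p.2
        zero_mem := mem_univ 0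
        inj := Subtype.val_injective
        mem := fun _ _ => mem_univ _
        fin := fun x => x.2
        surj := fun f _ hf => ⟨⟨f, hf⟩, rfl⟩
        dist_eq := hD }
  · have hQ : QPos.Countable := by
      refine (countable_range fun q : ℚ => (q : ℝ)).mono ?_
      rintro r ⟨q, -, rfl⟩
      exact ⟨q, rfl⟩
    have hpos : ∀ p : QPos, 0 < (p : ℝ) := by
      rintro ⟨r, q, hq, rfl⟩
      exact Rat.cast_pos.2 hq
    exact Coordinates.hasAmpleGenerics_binary (c := fun x => x.1)
      { countable := hQ
        pos := hpos
        zero_mem := show 0 < 2 from two_pos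
        inj := Subtype.val_injective
        mem := fun x => x.2.1
        fin := fun x => x.2.2
        surj := fun f hA hf => ⟨⟨f, hA, hf⟩, rfl⟩
        dist_eq := hD }
end

section
/- Let R be the set of positive integers and let G = Iso(X^2_R) be the isometry group of the Polish ultrametric 2-Urysohn space X^2_R. Then G is locally compact, and for every n ∈ ℕ the diagonal conjugation action of G on G^{n+1}, given by g.(g_0,…,g_n) = (g g_0 g^{-1},…,g g_n g^{-1}), has a dense orbit. -/
/-!
The space `X = X^2_R` consists of the finitely supported `0`-`1` sequences indexed by the positive
integers, and `d(x, y)` is the largest index at which `x` and `y` differ. The proof only uses the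
following features of `X`: it is ultrametric, its closed balls are finite, and for a base point `o`
and every integer `M > 0` some isometry moves `o` to distance `M` (flip the `M`-th coordinate).

*Local compactness* (`UltraGen.locallyCompact_iso`). The isometries with a prescribed value at `o`
form a clopen set. An isometric self-map sending `o` to `g o` maps each finite ball around `o`
injectively into an isometric copy of it, so it is automatically onto; hence this set is closed in a
product of finite balls, and is compact.

*Dense orbits* (`UltraGen.exists_dense_orbit`). Let `w_0, w_1, …` be dense in `G^(n+1)`. For each
index `a` coding a pair `(j, l)` choose a radius `k_a ≥ l` such that all entries of `w_j` preserve
the ball of radius `k_a` about `o`, and an isometry `h_a` moving that ball to a ball `C_a`; since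
`o` can be moved to arbitrary integer distances, the `C_a` can be taken pairwise disjoint. In an
ultrametric space isometries of pairwise disjoint balls extend to an isometry which is the identity
elsewhere (`UltraGen.exists_glue`), so there is a tuple `v` acting on each `C_a` as
`h_a w_j h_a⁻¹`. Then `h_a⁻¹ v h_a` agrees with `w_j` on the ball of radius `l` about `o`, so
every `w_j` is a limit of conjugates of `v`.
-/

open Metric Set Topology

namespace UltraGen

section Abstract

variable {X : Type*} [MetricSpace X]

lemma isInducing_coe : IsInducing (fun g : X ≃ᵢ X => (g : X → X)) := ⟨rfl⟩

/-! ### Local compactness -/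

/-- If closed balls are finite, an isometric self-map that agrees with a bijective isometry at one
point is onto. -/
lemma surjective_of_isometry {o : X} (hfin : ∀ r : ℝ, (closedBall o r).Finite)
    (g : X ≃ᵢ X) {f : X → X} (hf : Isometry f) (hfo : f o = g o) : Function.Surjective f := by
  have hs : ∀ y, ∃ x, g.symm (f x) = y := by
    intro y
    have hiso : Isometry (fun x => g.symm (f x)) := g.symm.isometry.comp hf
    have hmaps : MapsTo (fun x => g.symm (f x)) (closedBall o (dist y o))
        (closedBall o (dist y o)) := by
      intro x hx
      have h := hiso.dist_eq x o
      simp only [hfo, IsometryEquiv.symm_apply_apply] at h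
      simpa [mem_closedBall, h] using hx
    obtain ⟨x, -, hx⟩ := surj_on_of_inj_on_of_ncard_le (fun x _ => g.symm (f x))
      (fun x hx => hmaps hx) (fun _ _ _ _ h => hiso.injective h) le_rfl
      (ht := hfin (dist y o)) y (show y ∈ closedBall o (dist y o) by simp)
    exact ⟨x, hx.symm⟩
  intro y
  obtain ⟨x, hx⟩ := hs (g.symm y)
  exact ⟨x, g.symm.injective hx⟩

lemma isCompact_fiber {o : X} (hfin : ∀ r : ℝ, (closedBall o r).Finite) (g : X ≃ᵢ X) :
    IsCompact {f : X ≃ᵢ X | f o = g o} := by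
  rw [isInducing_coe.isCompact_iff]
  have himage : (fun f : X ≃ᵢ X => (f : X → X)) '' {f : X ≃ᵢ X | f o = g o}
      = {f : X → X | Isometry f ∧ f o = g o} := by
    ext f
    constructor
    · rintro ⟨f, hf, rfl⟩
      exact ⟨f.isometry, hf⟩
    · rintro ⟨hf, hfo⟩
      have hb : Function.Bijective f := ⟨hf.injective, surjective_of_isometry hfin g hf hfo⟩
      exact ⟨⟨Equiv.ofBijective f hb, hf⟩, hfo, rfl⟩
  rw [himage]
  have hfin' : ∀ r : ℝ, (closedBall (g o) r).Finite := fun r => by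
    rw [← g.image_closedBall]
    exact (hfin r).image _
  have hcomp : IsCompact (Set.pi univ fun x : X => closedBall (g o) (dist x o)) :=
    isCompact_univ_pi fun x => (hfin' _).isCompact
  refine hcomp.of_isClosed_subset ?_ ?_
  · have hset : {f : X → X | Isometry f ∧ f o = g o}
        = (⋂ x, ⋂ y, {f : X → X | dist (f x) (f y) = dist x y}) ∩ {f | f o = g o} := by
      ext f
      simp [isometry_iff_dist_eq]
    rw [hset]
    refine IsClosed.inter (isClosed_iInter fun x => isClosed_iInter fun y => ?_) ?_
    · exact isClosed_eq ((continuous_apply x).dist (continuous_apply y)) continuous_const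
    · exact isClosed_eq (continuous_apply o) continuous_const
  · rintro f ⟨hf, hfo⟩ x -
    rw [mem_closedBall, ← hfo, hf.dist_eq]

lemma discreteTopology_of_finite {o : X} (hfin : ∀ r : ℝ, (closedBall o r).Finite) :
    DiscreteTopology X := by
  refine discreteTopology_iff_isOpen_singleton.2 fun x => ?_
  have hb : (ball x 1).Finite := (hfin (1 + dist x o)).subset fun y hy => by
    rw [mem_ball] at hy
    rw [mem_closedBall]
    linarith [dist_triangle y x o]
  have h := (isOpen_ball (x := x) (ε := 1)).sdiff (hb.subset (sdiff_subset (t := {x}))).isClosed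
  rwa [sdiff_sdiff_right_self,
    inter_eq_right.2 (singleton_subset_iff.2 (mem_ball_self one_pos))] at h

lemma locallyCompact_iso {o : X} (hfin : ∀ r : ℝ, (closedBall o r).Finite) :
    LocallyCompactSpace (X ≃ᵢ X) := by
  have := discreteTopology_of_finite hfin
  have : T2Space (X ≃ᵢ X) :=
    T2Space.of_injective_continuous (f := fun g : X ≃ᵢ X => (g : X → X))
      DFunLike.coe_injective isInducing_coe.continuous
  have : WeaklyLocallyCompactSpace (X ≃ᵢ X) := ⟨fun g => by
    refine ⟨_, isCompact_fiber hfin g, IsOpen.mem_nhds ?_ rfl⟩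
    exact (isOpen_discrete {g o}).preimage
      ((continuous_apply o).comp isInducing_coe.continuous)⟩
  infer_instance

/-! ### Gluing isometries of disjoint balls -/

open Classical in
/-- The map acting as `u a` on the set `C a`, and as the identity off all of these sets. It is
meaningful when the sets `C a` are pairwise disjoint. -/
noncomputable def glue (C : ℕ → Set X) (u : ℕ → X ≃ᵢ X) (x : X) : X :=
  if h : ∃ a, x ∈ C a then u h.choose x else x

lemma glue_of_mem {C : ℕ → Set X} (hC : ∀ a b x, x ∈ C a → x ∈ C b → a = b)
    (u : ℕ → X ≃ᵢ X) {a : ℕ} {x : X} (hx : x ∈ C a) : glue C u x = u a x := by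
  have h : ∃ a, x ∈ C a := ⟨a, hx⟩
  rw [glue, dif_pos h, hC _ _ x h.choose_spec hx]

lemma glue_of_notMem {C : ℕ → Set X} (u : ℕ → X ≃ᵢ X) {x : X} (hx : ¬ ∃ a, x ∈ C a) :
    glue C u x = x := dif_neg hx

variable [IsUltrametricDist X]

lemma dist_eq_of_mem_of_notMem {c x y : X} {k : ℝ} (hx : x ∈ closedBall c k)
    (hy : y ∉ closedBall c k) : dist x y = dist c y := by
  rw [mem_closedBall] at hx hy
  have h1 := dist_triangle_max x c y
  have h2 := dist_triangle_max c x y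
  rw [dist_comm c x] at h2
  rw [dist_comm y c] at hy
  rcases le_max_iff.1 h1 with h | h <;> rcases le_max_iff.1 h2 with h' | h' <;> linarith

lemma mapsTo_closedBall {c : X} {k : ℝ} {u : X ≃ᵢ X} (hu : dist (u c) c ≤ k) {x : X}
    (hx : x ∈ closedBall c k) : u x ∈ closedBall c k := by
  rw [mem_closedBall] at *
  exact (dist_triangle_max _ (u c) _).trans (max_le (by rwa [u.dist_eq]) hu)

lemma isometry_glue {c : ℕ → X} {k : ℕ → ℝ}
    (hC : ∀ a b x, x ∈ closedBall (c a) (k a) → x ∈ closedBall (c b) (k b) → a = b)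
    {u : ℕ → X ≃ᵢ X} (hu : ∀ a, dist (u a (c a)) (c a) ≤ k a) :
    Isometry (glue (fun a => closedBall (c a) (k a)) u) := by
  refine Isometry.of_dist_eq fun x y => ?_
  -- Moving `x` inside its own ball does not change its distance to points outside that ball.
  have key : ∀ a x y, x ∈ closedBall (c a) (k a) → y ∉ closedBall (c a) (k a) →
      dist (u a x) y = dist x y := fun a x y hx hy => by
    rw [dist_eq_of_mem_of_notMem hx hy, dist_eq_of_mem_of_notMem (mapsTo_closedBall (hu a) hx) hy]
  by_cases hx : ∃ a, x ∈ closedBall (c a) (k a)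
  · obtain ⟨a, ha⟩ := hx
    rw [glue_of_mem hC u ha]
    by_cases hy : ∃ b, y ∈ closedBall (c b) (k b)
    · obtain ⟨b, hb⟩ := hy
      rw [glue_of_mem hC u hb]
      by_cases hab : a = b
      · subst hab
        exact (u a).dist_eq x y
      · have hya : y ∉ closedBall (c a) (k a) := fun h => hab (hC a b y h hb)
        have hxb : u a x ∉ closedBall (c b) (k b) := fun h =>
          hab (hC a b _ (mapsTo_closedBall (hu a) ha) h)
        rw [dist_comm, key b _ _ hb hxb, dist_comm, key a _ _ ha hya]
    · rw [glue_of_notMem u hy]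
      exact key a x y ha fun h => hy ⟨a, h⟩
  · rw [glue_of_notMem u hx]
    by_cases hy : ∃ b, y ∈ closedBall (c b) (k b)
    · obtain ⟨b, hb⟩ := hy
      rw [glue_of_mem hC u hb, dist_comm, key b y x hb fun h => hx ⟨b, h⟩, dist_comm]
    · rw [glue_of_notMem u hy]

lemma glue_glue {c : ℕ → X} {k : ℕ → ℝ}
    (hC : ∀ a b x, x ∈ closedBall (c a) (k a) → x ∈ closedBall (c b) (k b) → a = b)
    {u u' : ℕ → X ≃ᵢ X} (hu : ∀ a, dist (u a (c a)) (c a) ≤ k a)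
    (huu' : ∀ a x, u' a (u a x) = x) (x : X) :
    glue (fun a => closedBall (c a) (k a)) u' (glue (fun a => closedBall (c a) (k a)) u x) = x := by
  by_cases hx : ∃ a, x ∈ closedBall (c a) (k a)
  · obtain ⟨a, ha⟩ := hx
    rw [glue_of_mem hC u ha, glue_of_mem hC u' (mapsTo_closedBall (hu a) ha), huu']
  · rw [glue_of_notMem u hx, glue_of_notMem u' hx]

/-- Isometries `u a`, each preserving a ball from a pairwise disjoint family, are realized
simultaneously on these balls by one isometry. -/
lemma exists_glue {c : ℕ → X} {k : ℕ → ℝ}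
    (hC : ∀ a b x, x ∈ closedBall (c a) (k a) → x ∈ closedBall (c b) (k b) → a = b)
    {u : ℕ → X ≃ᵢ X} (hu : ∀ a, dist (u a (c a)) (c a) ≤ k a) :
    ∃ v : X ≃ᵢ X, ∀ a, ∀ x ∈ closedBall (c a) (k a), v x = u a x := by
  have hu' : ∀ a, dist ((u a).symm (c a)) (c a) ≤ k a := fun a => by
    rw [← (u a).dist_eq, IsometryEquiv.apply_symm_apply, dist_comm]
    exact hu a
  refine ⟨IsometryEquiv.mk' (glue (fun a => closedBall (c a) (k a)) u)
    (glue (fun a => closedBall (c a) (k a)) fun a => (u a).symm)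
    (glue_glue hC hu' fun a x => (u a).apply_symm_apply x) (isometry_glue hC hu), ?_⟩
  intro a x hx
  exact glue_of_mem hC u hx

/-! ### Dense orbits -/

lemma exists_dense_orbit {o : X} (hfin : ∀ r : ℝ, (closedBall o r).Finite)
    (hmove : ∀ M : ℕ, 0 < M → ∃ h : X ≃ᵢ X, dist o (h o) = M) (n : ℕ) :
    ∃ v : Fin (n + 1) → (X ≃ᵢ X),
      Dense {w : Fin (n + 1) → (X ≃ᵢ X) | ∃ g, ∀ i, w i = g * v i * g⁻¹} := by
  have : Countable X := by
    have hU : (univ : Set X) = ⋃ m : ℕ, closedBall o m := (iUnion_closedBall_nat o).symm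
    rw [← countable_univ_iff, hU]
    exact countable_iUnion fun m => (hfin m).countable
  have : SecondCountableTopology X := by
    have := discreteTopology_of_finite hfin
    infer_instance
  have : SecondCountableTopology (X ≃ᵢ X) := isInducing_coe.secondCountableTopology
  obtain ⟨w, hw⟩ := TopologicalSpace.exists_dense_seq (Fin (n + 1) → (X ≃ᵢ X))
  -- A radius at least `a` whose ball about `o` is preserved by the tuple `w (unpair a).1`.
  have hk : ∀ a : ℕ, ∃ k : ℕ, a ≤ k ∧ ∀ i, dist (w a.unpair.1 i o) o ≤ k := fun a => by
    obtain ⟨k, hk⟩ := exists_nat_ge (∑ i, dist (w a.unpair.1 i o) o)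
    refine ⟨max a k, le_max_left _ _, fun i => ?_⟩
    have h1 : dist (w a.unpair.1 i o) o ≤ ∑ i, dist (w a.unpair.1 i o) o :=
      Finset.single_le_sum (f := fun i => dist (w a.unpair.1 i o) o)
        (fun _ _ => dist_nonneg) (Finset.mem_univ i)
    exact h1.trans (hk.trans (by exact_mod_cast le_max_right a k))
  choose k hak hk using hk
  -- The distances `pair (k a) a + 1` exceed `k a` and are pairwise distinct.
  choose h hh using fun a : ℕ => hmove (Nat.pair (k a) a + 1) (Nat.succ_pos _)
  have hC : ∀ a b x, x ∈ closedBall (h a o) (k a : ℝ) → x ∈ closedBall (h b o) (k b : ℝ) →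
      a = b := by
    -- The distance to `o` is constant on each ball.
    have key : ∀ a x, x ∈ closedBall (h a o) (k a : ℝ) →
        dist x o = ((Nat.pair (k a) a + 1 : ℕ) : ℝ) := fun a x hx => by
      rw [dist_eq_of_mem_of_notMem hx, dist_comm, hh]
      rw [mem_closedBall, hh, not_le, Nat.cast_lt]
      exact Nat.lt_succ_of_le (Nat.left_le_pair _ _)
    intro a b x ha hb
    have := (key a x ha).symm.trans (key b x hb)
    have h2 : Nat.pair (k a) a = Nat.pair (k b) b := Nat.succ.inj (Nat.cast_injective this)
    exact (Nat.pair_eq_pair.1 h2).2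
  have hv : ∀ i, ∃ v : X ≃ᵢ X, ∀ a, ∀ x ∈ closedBall (h a o) (k a : ℝ),
      v x = (h a * w a.unpair.1 i * (h a)⁻¹) x := fun i => by
    refine exists_glue hC fun a => ?_
    change dist (h a (w _ i ((h a).symm (h a o)))) (h a o) ≤ k a
    rw [IsometryEquiv.symm_apply_apply, (h a).dist_eq]
    exact hk a i
  choose v hv using hv
  refine ⟨v, dense_iff_closure_eq.2 (eq_univ_of_univ_subset ?_)⟩
  rw [← hw.closure_range]
  refine closure_minimal ?_ isClosed_closure
  rintro _ ⟨j, rfl⟩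
  refine mem_closure_of_tendsto (b := Filter.atTop)
    (f := fun l i => (h (Nat.pair j l))⁻¹ * v i * (h (Nat.pair j l))⁻¹⁻¹) ?_
    (Filter.Eventually.of_forall fun l => ⟨_, fun i => rfl⟩)
  refine tendsto_pi_nhds.2 fun i => isInducing_coe.tendsto_nhds_iff.2 (tendsto_pi_nhds.2 fun x => ?_)
  refine tendsto_const_nhds.congr' ?_
  obtain ⟨l₀, hl₀⟩ := exists_nat_ge (dist x o)
  filter_upwards [Filter.eventually_ge_atTop l₀] with l hl
  have hx : h (Nat.pair j l) x ∈ closedBall (h (Nat.pair j l) o) (k (Nat.pair j l) : ℝ) := by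
    rw [mem_closedBall, IsometryEquiv.dist_eq]
    refine hl₀.trans ?_
    exact_mod_cast hl.trans ((Nat.right_le_pair j l).trans (hak _))
  have hvx := hv i _ _ hx
  rw [Nat.unpair_pair] at hvx
  change w j i x = (h (Nat.pair j l)).symm (v i (h (Nat.pair j l) x))
  rw [hvx]
  change w j i x = (h (Nat.pair j l)).symm (h (Nat.pair j l) (w j i ((h (Nat.pair j l)).symm
    (h (Nat.pair j l) x))))
  simp

end Abstract

/-! ### The space of finitely supported binary sequences -/

lemma one_le_of_mem_NPos {r : ℝ} (hr : r ∈ NPos) : 1 ≤ r := by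
  obtain ⟨m, hm, rfl⟩ := hr
  exact_mod_cast hm

lemma finite_support (x : UrysohnCarrierN NPos 2) : {p : NPos | x.1 p ≠ 0}.Finite := by
  refine (x.2.2 (1 / 2) (by norm_num)).subset fun p hp => ⟨?_, hp⟩
  linarith [one_le_of_mem_NPos p.2]

lemma finite_NPos_le (r : ℝ) : {p : NPos | (p : ℝ) ≤ r}.Finite := by
  obtain ⟨N, hN⟩ := exists_nat_ge r
  have h : ((fun m : ℕ => (m : ℝ)) '' Set.Iic N).Finite := (Set.finite_Iic N).image _
  refine (h.preimage Subtype.val_injective.injOn).subset ?_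
  rintro ⟨_, m, hm, rfl⟩ hp
  exact ⟨m, by exact_mod_cast (show (m : ℝ) ≤ r from hp).trans hN, rfl⟩

/-- The element with all coordinates `0`. -/
def zeroSeq : UrysohnCarrierN NPos 2 := ⟨fun _ => 0, fun _ => by norm_num, fun r _ => by simp⟩

open Classical in
/-- Exchange the values `0` and `1` at the coordinate `q`. -/
noncomputable def flip (q : NPos) (x : UrysohnCarrierN NPos 2) : UrysohnCarrierN NPos 2 :=
  ⟨Function.update x.1 q (1 - x.1 q), by
    constructor
    · intro p
      by_cases h : p = q
      · subst h
        rw [Function.update_self]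
        omega
      · rw [Function.update_of_ne h]
        exact x.2.1 p
    · intro r _
      refine ((finite_support x).insert q).subset ?_
      rintro p ⟨_, hp⟩
      by_cases h : p = q
      · exact Or.inl h
      · rw [Function.update_of_ne h] at hp
        exact Or.inr hp⟩

lemma flip_self (q : NPos) (x : UrysohnCarrierN NPos 2) : (flip q x).1 q = 1 - x.1 q :=
  Function.update_self ..

lemma flip_of_ne {p q : NPos} (h : p ≠ q) (x : UrysohnCarrierN NPos 2) :
    (flip q x).1 p = x.1 p :=
  Function.update_of_ne h ..

lemma flip_flip (q : NPos) (x : UrysohnCarrierN NPos 2) : flip q (flip q x) = x := by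
  apply Subtype.ext
  funext p
  by_cases h : p = q
  · subst h
    rw [flip_self, flip_self]
    have := x.2.1 p
    omega
  · rw [flip_of_ne h, flip_of_ne h]

lemma flip_ne_iff (q p : NPos) (x y : UrysohnCarrierN NPos 2) :
    (flip q x).1 p ≠ (flip q y).1 p ↔ x.1 p ≠ y.1 p := by
  by_cases h : p = q
  · subst h
    rw [flip_self, flip_self]
    have := x.2.1 p
    have := y.2.1 p
    omega
  · rw [flip_of_ne h, flip_of_ne h]

section Concrete

variable [D : MetricSpace (UrysohnCarrierN NPos 2)]

/-- The supremum defining the distance is taken over a finite set, so it is the largest coordinate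
at which the two sequences differ. -/
lemma dist_le_iff' (hD : ∀ x y : UrysohnCarrierN NPos 2, x ≠ y → dist x y = urysohnDistN x y)
    (x y : UrysohnCarrierN NPos 2) {t : ℝ} (ht : 0 ≤ t) :
    dist x y ≤ t ↔ ∀ p : NPos, x.1 p ≠ y.1 p → (p : ℝ) ≤ t := by
  by_cases hxy : x = y
  · subst hxy
    simp [ht]
  rw [hD x y hxy, urysohnDistN]
  have hset : {r : ℝ | ∃ h : r ∈ NPos, x.1 ⟨r, h⟩ ≠ y.1 ⟨r, h⟩}
      = Subtype.val '' {p : NPos | x.1 p ≠ y.1 p} := by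
    ext r
    simp
  have hfin : {p : NPos | x.1 p ≠ y.1 p}.Finite := by
    refine ((finite_support x).union (finite_support y)).subset fun p hp => ?_
    by_contra hcon
    simp only [mem_union, mem_ofPred_eq, not_or, not_not] at hcon
    exact hp (hcon.1.trans hcon.2.symm)
  have hne : {p : NPos | x.1 p ≠ y.1 p}.Nonempty := by
    by_contra hcon
    refine hxy (Subtype.ext (funext fun p => ?_))
    by_contra hp
    exact hcon ⟨p, hp⟩
  rw [hset, csSup_le_iff (hfin.image _).bddAbove (hne.image _)]
  simp only [forall_mem_image, mem_ofPred_eq]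

lemma isUltrametricDist
    (hD : ∀ x y : UrysohnCarrierN NPos 2, x ≠ y → dist x y = urysohnDistN x y) :
    IsUltrametricDist (UrysohnCarrierN NPos 2) := ⟨fun x y z => by
  rw [dist_le_iff' hD _ _ (le_max_of_le_left dist_nonneg)]
  intro p hp
  by_cases h : x.1 p = y.1 p
  · exact le_max_of_le_right ((dist_le_iff' hD y z dist_nonneg).1 le_rfl p (h ▸ hp))
  · exact le_max_of_le_left ((dist_le_iff' hD x y dist_nonneg).1 le_rfl p h)⟩

lemma finite_closedBall
    (hD : ∀ x y : UrysohnCarrierN NPos 2, x ≠ y → dist x y = urysohnDistN x y)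
    (o : UrysohnCarrierN NPos 2) (r : ℝ) : (closedBall o r).Finite := by
  rcases lt_or_ge r 0 with hr | hr
  · rw [closedBall_eq_empty.2 hr]
    exact finite_empty
  have : Finite {p : NPos | (p : ℝ) ≤ r} := finite_NPos_le r
  -- A point of the ball is determined by its coordinates up to `r`.
  let F : closedBall o r → ({p : NPos | (p : ℝ) ≤ r} → Fin 2) :=
    fun x p => ⟨x.1.1 p.1, x.1.2.1 p.1⟩
  refine Finite.of_injective F fun x y hxy => ?_
  refine Subtype.ext (Subtype.ext (funext fun p => ?_))
  by_cases hp : (p : ℝ) ≤ r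
  · exact congrArg Fin.val (congrFun hxy ⟨p, hp⟩)
  · have key : ∀ z : closedBall o r, z.1.1 p = o.1 p := fun z => by
      by_contra hz
      exact hp ((dist_le_iff' hD z.1 o hr).1 z.2 p hz)
    rw [key x, key y]

lemma exists_move
    (hD : ∀ x y : UrysohnCarrierN NPos 2, x ≠ y → dist x y = urysohnDistN x y)
    (M : ℕ) (hM : 0 < M) :
    ∃ h : UrysohnCarrierN NPos 2 ≃ᵢ UrysohnCarrierN NPos 2, dist zeroSeq (h zeroSeq) = M := by
  let q : NPos := ⟨M, M, hM, rfl⟩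
  have hiso : Isometry (flip q) := by
    refine Isometry.of_dist_eq fun x y => le_antisymm ?_ ?_
    · rw [dist_le_iff' hD _ _ dist_nonneg]
      intro p hp
      exact (dist_le_iff' hD x y dist_nonneg).1 le_rfl p ((flip_ne_iff q p x y).1 hp)
    · rw [dist_le_iff' hD _ _ dist_nonneg]
      intro p hp
      exact (dist_le_iff' hD _ _ dist_nonneg).1 le_rfl p ((flip_ne_iff q p x y).2 hp)
  refine ⟨IsometryEquiv.mk' (flip q) (flip q) (flip_flip q) hiso, ?_⟩
  change dist zeroSeq (flip q zeroSeq) = M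
  refine le_antisymm ?_ ?_
  · rw [dist_le_iff' hD _ _ (Nat.cast_nonneg M)]
    intro p hp
    by_cases h : p = q
    · rw [h]
    · exact absurd (flip_of_ne h zeroSeq).symm hp
  · refine (dist_le_iff' hD zeroSeq (flip q zeroSeq) dist_nonneg).1 le_rfl q ?_
    rw [flip_self]
    simp [zeroSeq]

end Concrete

end UltraGen

open UltraGen in
theorem two_urysohn_nat_locally_compact_and_dense_diagonal_conjugation_orbits
    (D : MetricSpace (UrysohnCarrierN NPos 2))
    (hD : ∀ x y : UrysohnCarrierN NPos 2, x ≠ y → D.dist x y = urysohnDistN x y) :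
    letI := D
    LocallyCompactSpace (UrysohnCarrierN NPos 2 ≃ᵢ UrysohnCarrierN NPos 2) ∧
    ∀ n : ℕ, ∃ v : Fin (n + 1) → (UrysohnCarrierN NPos 2 ≃ᵢ UrysohnCarrierN NPos 2),
      Dense {w : Fin (n + 1) → (UrysohnCarrierN NPos 2 ≃ᵢ UrysohnCarrierN NPos 2) |
        ∃ g, ∀ i, w i = g * v i * g⁻¹} := by
  let := D
  have := isUltrametricDist hD
  exact ⟨locallyCompact_iso (finite_closedBall hD zeroSeq),
    exists_dense_orbit (finite_closedBall hD zeroSeq) (exists_move hD)⟩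
end
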